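/- Let k, m, n be positive integers with k+m ≤ n and let w ∈ Sₙ. Then in Hₙ, 𝔖_w · h_m(x₁,…,x_k) = Σ_{w′} 𝔖_{w′}, where h_m(x₁,…,x_k) is the complete homogeneous symmetric polynomial of degree m in x₁,…,x_k and the sum is over all w′ ∈ Sₙ with w →_{r[k,m]} w′. -/

import Mathlib

open Equiv MvPolynomial

attribute [local instance] Classical.propDecidable

namespace SchubertPieri

/-- Position `j ∈ {1,…,N}` (1-indexed) as an element of `Fin N` (0-indexed). -/
def pos (N : ℕ) [NeZero N] (j : ℕ) : Fin N :=
  ⟨(j - 1) % N, Nat.mod_lt _ (Nat.pos_of_ne_zero (NeZero.ne N))⟩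

/-- The transposition `t_{a,b}` interchanging positions `a` and `b` (1-indexed). -/
def t (N : ℕ) [NeZero N] (a b : ℕ) : Equiv.Perm (Fin N) :=
  Equiv.swap (pos N a) (pos N b)

/-- The value `w(j)` for `j ∈ {1,…,N}` (1-indexed). -/
def val {N : ℕ} [NeZero N] (w : Equiv.Perm (Fin N)) (j : ℕ) : ℕ :=
  (w (pos N j) : ℕ) + 1

/-- The length of `w`: its number of inversions. -/
def len {N : ℕ} (w : Equiv.Perm (Fin N)) : ℕ :=
  (Finset.univ.filter fun p : Fin N × Fin N => p.1 < p.2 ∧ w p.2 < w p.1).card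

/-- The longest permutation `w₀ : j ↦ N+1-j`. -/
def w0 (N : ℕ) : Equiv.Perm (Fin N) :=
  ⟨Fin.rev, Fin.rev, Fin.rev_rev, Fin.rev_rev⟩

/-- The product `t_{a 0, b 0} ⋯ t_{a (i-1), b (i-1)}`. -/
def tProd (N : ℕ) [NeZero N] (a b : ℕ → ℕ) (i : ℕ) : Equiv.Perm (Fin N) :=
  ((List.range i).map fun j => t N (a j) (b j)).prod

/-- `r[k,m] = t_{k,k+1} t_{k,k+2} ⋯ t_{k,k+m}`, the (m+1)-cycle with
`r[k,m](k) = k+m` and `r[k,m](j) = j-1` for `k+1 ≤ j ≤ k+m`. -/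
def rPerm (N k m : ℕ) [NeZero N] : Equiv.Perm (Fin N) :=
  ((List.range m).map fun i => t N k (k + 1 + i)).prod

/-- `c[k,m] = t_{k,k+1} t_{k-1,k+1} ⋯ t_{k-m+1,k+1}`, the (m+1)-cycle with
`c[k,m](j) = j+1` for `k-m+1 ≤ j ≤ k` and `c[k,m](k+1) = k-m+1`. -/
def cPerm (N k m : ℕ) [NeZero N] : Equiv.Perm (Fin N) :=
  ((List.range m).map fun i => t N (k - i) (k + 1)).prod

/-- The conditions that `aᵢ ≤ k < bᵢ` (with all indices in `{1,…,N}`) and that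
`ℓ(w t_{a₁ b₁} ⋯ t_{aᵢ bᵢ}) = ℓ(w) + i` for `1 ≤ i ≤ m`. -/
def StepOK (N k m : ℕ) [NeZero N] (w : Equiv.Perm (Fin N)) (a b : ℕ → ℕ) : Prop :=
  (∀ i, i < m → 1 ≤ a i ∧ a i ≤ k ∧ k < b i ∧ b i ≤ N) ∧
  (∀ i, i ≤ m → len (w * tProd N a b i) = len w + i)

/-- `w →_{r[k,m]} w'`. -/
def RelR (N k m : ℕ) [NeZero N] (w w' : Equiv.Perm (Fin N)) : Prop :=
  ∃ a b : ℕ → ℕ, StepOK N k m w a b ∧ w' = w * tProd N a b m ∧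
    (∀ i j, i < m → j < m → i ≠ j → b i ≠ b j)

/-- `w →_{c[k,m]} w'`. -/
def RelC (N k m : ℕ) [NeZero N] (w w' : Equiv.Perm (Fin N)) : Prop :=
  ∃ a b : ℕ → ℕ, StepOK N k m w a b ∧ w' = w * tProd N a b m ∧
    (∀ i j, i < m → j < m → i ≠ j → a i ≠ a j)

/-- The divided difference operator `∂ᵢ f = (f - sᵢ·f)/(xᵢ - xᵢ₊₁)` (1-indexed `i`);
the quotient is exact, and is recovered here as the (unique) witness of divisibility. -/
noncomputable def divDiff {N : ℕ} [NeZero N] (i : ℕ) (f : MvPolynomial (Fin N) ℤ) :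
    MvPolynomial (Fin N) ℤ :=
  if h : (X (pos N i) - X (pos N (i + 1))) ∣ (f - rename (⇑(t N i (i + 1))) f) then
    h.choose
  else 0

/-- `∂_{a₁} ∘ ⋯ ∘ ∂_{a_p}` applied to `f`, for a word `l = [a₁,…,a_p]`. -/
noncomputable def divDiffWord {N : ℕ} [NeZero N] (l : List ℕ) (f : MvPolynomial (Fin N) ℤ) :
    MvPolynomial (Fin N) ℤ :=
  l.foldr divDiff f

/-- Auxiliary: produce a reduced word for `w` by repeatedly removing a descent. -/
def redWordAux (N : ℕ) [NeZero N] : ℕ → Equiv.Perm (Fin N) → List ℕ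
  | 0, _ => []
  | fuel + 1, w =>
    match ((List.range (N - 1)).map (· + 1)).find? (fun i => decide (val w (i + 1) < val w i)) with
    | none => []
    | some i => redWordAux N fuel (w * t N i (i + 1)) ++ [i]

/-- A canonical reduced word `(a₁,…,a_p)` for `w`, i.e. `w = s_{a₁} ⋯ s_{a_p}` with `p = ℓ(w)`. -/
def redWord (N : ℕ) [NeZero N] (w : Equiv.Perm (Fin N)) : List ℕ :=
  redWordAux N (N * N) w

/-- The staircase monomial `x₁^{N-1} x₂^{N-2} ⋯ x_{N-1}`. -/
noncomputable def staircase (N : ℕ) : MvPolynomial (Fin N) ℤ :=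
  ∏ i : Fin N, X i ^ (N - 1 - (i : ℕ))

/-- The Schubert polynomial `𝔖_w = ∂_{w⁻¹w₀}(x₁^{N-1} ⋯ x_{N-1})`. -/
noncomputable def schubertPoly (N : ℕ) [NeZero N] (w : Equiv.Perm (Fin N)) :
    MvPolynomial (Fin N) ℤ :=
  divDiffWord (redWord N (w⁻¹ * w0 N)) (staircase N)

/-- The ideal of `Rₙ` generated by the symmetric polynomials with zero constant term. -/
noncomputable def symIdeal (N : ℕ) : Ideal (MvPolynomial (Fin N) ℤ) :=
  Ideal.span {f : MvPolynomial (Fin N) ℤ | f.IsSymmetric ∧ constantCoeff f = 0}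

/-- The ring `Hₙ = Rₙ/𝒮`. -/
abbrev HRing (N : ℕ) := MvPolynomial (Fin N) ℤ ⧸ symIdeal N

/-- The class of the Schubert polynomial `𝔖_w` in `Hₙ`. -/
noncomputable def SS (N : ℕ) [NeZero N] (w : Equiv.Perm (Fin N)) : HRing N :=
  Ideal.Quotient.mk (symIdeal N) (schubertPoly N w)

/-- The complete homogeneous symmetric polynomial of degree `m` in `x₁,…,x_k`. -/
noncomputable def hPoly (N k m : ℕ) : MvPolynomial (Fin N) ℤ :=
  ∑ s ∈ (Finset.univ.filter fun i : Fin N => (i : ℕ) < k).sym m,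
    (Multiset.map X (s : Multiset (Fin N))).prod

/-- The elementary symmetric polynomial of degree `m` in `x₁,…,x_k`. -/
noncomputable def ePoly (N k m : ℕ) : MvPolynomial (Fin N) ℤ :=
  ∑ s ∈ (Finset.univ.filter fun i : Fin N => (i : ℕ) < k).powersetCard m, ∏ i ∈ s, X i

/-- Covering relation of the `k`-Bruhat order. -/
def kCover (N k : ℕ) [NeZero N] (w w' : Equiv.Perm (Fin N)) : Prop :=
  ∃ a b : ℕ, 1 ≤ a ∧ a ≤ k ∧ k < b ∧ b ≤ N ∧ w' = w * t N a b ∧ len w' = len w + 1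

/-- The (strict) `k`-Bruhat order `<ₖ`. -/
def kBruhat (N k : ℕ) [NeZero N] : Equiv.Perm (Fin N) → Equiv.Perm (Fin N) → Prop :=
  Relation.TransGen (kCover N k)

/-- The label `w⁽ⁱ⁺¹⁾(a_{i+1})` (0-indexed `i`) of the `(i+1)`-st step of a path. -/
def label {N : ℕ} [NeZero N] (w : Equiv.Perm (Fin N)) (a b : ℕ → ℕ) (i : ℕ) : ℕ :=
  val (w * tProd N a b (i + 1)) (a i)

/-- `(a,b)` encodes a path of length `m` in the `k`-Bruhat order from `w` to `w'`
(normalized so that `a i = b i = 0` for `i ≥ m`, making the encoding unique). -/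
def PathWit (N k m : ℕ) [NeZero N] (w w' : Equiv.Perm (Fin N))
    (ab : (ℕ → ℕ) × (ℕ → ℕ)) : Prop :=
  StepOK N k m w ab.1 ab.2 ∧ w' = w * tProd N ab.1 ab.2 m ∧
    ∀ i, m ≤ i → ab.1 i = 0 ∧ ab.2 i = 0

/-- Paths of length `m` in the `k`-Bruhat order from `w` to `w'` with strictly
increasing labels. -/
def IncPaths (N k m : ℕ) [NeZero N] (w w' : Equiv.Perm (Fin N)) :
    Set ((ℕ → ℕ) × (ℕ → ℕ)) :=
  {ab | PathWit N k m w w' ab ∧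
    ∀ i j, i < j → j < m → label w ab.1 ab.2 i < label w ab.1 ab.2 j}

/-- Paths of length `m` in the `k`-Bruhat order from `w` to `w'` with strictly
decreasing labels. -/
def DecPaths (N k m : ℕ) [NeZero N] (w w' : Equiv.Perm (Fin N)) :
    Set ((ℕ → ℕ) × (ℕ → ℕ)) :=
  {ab | PathWit N k m w w' ab ∧
    ∀ i j, i < j → j < m → label w ab.1 ab.2 j < label w ab.1 ab.2 i}


/-- The cycle `(x₁ x₂ … x_r)` (sending `x₁ ↦ x₂ ↦ ⋯ ↦ x_r ↦ x₁`), as a product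
of transpositions. -/
def cycleList (N : ℕ) [NeZero N] (l : List ℕ) : Equiv.Perm (Fin N) :=
  ((l.zip l.tail).map fun p => t N p.1 p.2).prod

/-- The Grassmannian permutation `h[k;p,q]` of descent `k` and hook shape `(p,1^{q-1})`:
the `(p+q)`-cycle `(k-q+1  k-q+2 … k  k+p  k+p-1 … k+1)`. -/
def hookPerm (N k p q : ℕ) [NeZero N] : Equiv.Perm (Fin N) :=
  cycleList N (((List.range q).map fun i => k - q + 1 + i) ++
    ((List.range p).reverse.map fun i => k + 1 + i))

/-- `w|ₚ ∈ S_{N-1}`: delete row `p` and column `w(p)` from the permutation matrix of `w`. -/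
def drop {N : ℕ} (w : Equiv.Perm (Fin (N + 1))) (p : Fin (N + 1)) : Equiv.Perm (Fin N) :=
  Equiv.removeNone (((finSuccEquiv' p).symm.trans (w : Fin (N + 1) ≃ Fin (N + 1))).trans
    (finSuccEquiv' (w p)))

/-- `lam` is a partition with at most `k` parts (1-indexed parts `lam 1 ≥ lam 2 ≥ ⋯`,
normalized by `lam 0 = 0`). -/
def IsPartFun (k : ℕ) (lam : ℕ → ℕ) : Prop :=
  lam 0 = 0 ∧ (∀ j, 1 ≤ j → lam (j + 1) ≤ lam j) ∧ ∀ j, k < j → lam j = 0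

/-- `h_d(x₁,…,x_k)` for an integer `d`, with `h_d = 0` for `d < 0`. -/
noncomputable def hPolyZ (N k : ℕ) (d : ℤ) : MvPolynomial (Fin N) ℤ :=
  if 0 ≤ d then hPoly N k d.toNat else 0

/-- The Schur polynomial `s_λ(x₁,…,x_k)`, via the Jacobi–Trudi determinant
`det(h_{λᵢ+j-i})_{1 ≤ i,j ≤ k}`. -/
noncomputable def schurPoly (N k : ℕ) (lam : ℕ → ℕ) : MvPolynomial (Fin N) ℤ :=
  (Matrix.of fun i j : Fin k =>
    hPolyZ N k ((lam ((i : ℕ) + 1) : ℤ) + (j : ℕ) - (i : ℕ))).det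

/-- `r_j = #{i : aᵢ = j}` (with `i` ranging over `0,…,m-1`, 0-indexed). -/
def rJ (a : ℕ → ℕ) (m j : ℕ) : ℕ := ((Finset.range m).filter fun i => a i = j).card

/-- `μ_j = r_{j+1} + ⋯ + r_k`. -/
def muJ (a : ℕ → ℕ) (m k j : ℕ) : ℕ :=
  if j = 0 then 0 else ∑ j' ∈ Finset.Icc (j + 1) k, rJ a m j'

/-- `λ_j = μ_j + r_j`. -/
def lamJ (a : ℕ → ℕ) (m k j : ℕ) : ℕ :=
  if j = 0 then 0 else muJ a m k j + rJ a m j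

/-- `d_j = #{i : bᵢ = N+1-j}` (with `i` ranging over `0,…,m-1`, 0-indexed). -/
def dJ (b : ℕ → ℕ) (m N j : ℕ) : ℕ :=
  ((Finset.range m).filter fun i => b i = N + 1 - j).card

/-- `μ′_j = d_{j+1} + ⋯ + d_{N-k}`. -/
def muJ' (b : ℕ → ℕ) (m N k j : ℕ) : ℕ :=
  if j = 0 then 0 else ∑ j' ∈ Finset.Icc (j + 1) (N - k), dJ b m N j'

/-- `λ′_j = μ′_j + d_j`. -/
def lamJ' (b : ℕ → ℕ) (m N k j : ℕ) : ℕ :=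
  if j = 0 then 0 else muJ' b m N k j + dJ b m N j

/-- The conjugate (transpose) partition: `νᵗ_j = #{i : νᵢ ≥ j}`, for `ν` with at
most `k` parts. -/
def conjPart (k : ℕ) (nu : ℕ → ℕ) (j : ℕ) : ℕ :=
  if j = 0 then 0 else ((Finset.Icc 1 k).filter fun i => j ≤ nu i).card

/-- `wv` is the Grassmannian permutation of descent `k` and shape `nu`:
`wv(j) = j + ν_{k+1-j}` for `1 ≤ j ≤ k`, and `wv` is increasing on `{k+1,…,N}`. -/
def IsGrassOf (N k : ℕ) [NeZero N] (nu : ℕ → ℕ) (wv : Equiv.Perm (Fin N)) : Prop :=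
  (∀ j, 1 ≤ j → j ≤ k → val wv j = j + nu (k + 1 - j)) ∧
  (∀ j, k < j → j < N → val wv j < val wv (j + 1))

/-- Paths of length `m` in the `k`-Bruhat order from `w` to `w'` whose labels
increase strictly for the first `p` steps and decrease strictly thereafter
(positions `p, p+1, …, m` being decreasing, 1-indexed). -/
def IncDecPaths (N k m p : ℕ) [NeZero N] (w w' : Equiv.Perm (Fin N)) :
    Set ((ℕ → ℕ) × (ℕ → ℕ)) :=
  {ab | PathWit N k m w w' ab ∧
    (∀ i j, i < j → j < p → label w ab.1 ab.2 i < label w ab.1 ab.2 j) ∧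
    (∀ i j, p - 1 ≤ i → i < j → j < m → label w ab.1 ab.2 j < label w ab.1 ab.2 i)}

/-- Paths of length `m` in the `k`-Bruhat order from `w` to `w'` whose labels
decrease strictly for the first `q` steps and increase strictly thereafter. -/
def DecIncPaths (N k m q : ℕ) [NeZero N] (w w' : Equiv.Perm (Fin N)) :
    Set ((ℕ → ℕ) × (ℕ → ℕ)) :=
  {ab | PathWit N k m w w' ab ∧
    (∀ i j, i < j → j < q → label w ab.1 ab.2 j < label w ab.1 ab.2 i) ∧
    (∀ i j, q - 1 ≤ i → i < j → j < m → label w ab.1 ab.2 i < label w ab.1 ab.2 j)}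


set_option linter.unusedSimpArgs false
set_option linter.unusedVariables false

section
theorem len_lt_swap {N : ℕ} (w : Equiv.Perm (Fin N)) {a b : Fin N} (hab : a < b)
    (hw : w a < w b) : len w < len (w * swap a b) := by
  unfold len
  set tt := swap a b with htt
  have h1 : tt a = b := swap_apply_left a b
  have h2 : tt b = a := swap_apply_right a b
  have h3 : ∀ c, c ≠ a → c ≠ b → tt c = c := fun c hc hc' => swap_apply_of_ne_of_ne hc hc'
  let φ : Fin N × Fin N → Fin N × Fin N := fun p =>
    if tt p.1 < tt p.2 then (tt p.1, tt p.2) else p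
  have h4 : ∀ c, tt (tt c) = c := fun c => by simp [htt]
  refine lt_of_lt_of_le (Nat.lt_succ_self _) ?_
  have hcard : (insert (a, b) ((Finset.univ.filter fun p : Fin N × Fin N =>
      p.1 < p.2 ∧ w p.2 < w p.1).image φ)).card =
      (Finset.univ.filter fun p : Fin N × Fin N => p.1 < p.2 ∧ w p.2 < w p.1).card + 1 := by
    rw [Finset.card_insert_of_notMem, Finset.card_image_of_injOn]
    · rintro ⟨p, q⟩ hp ⟨p', q'⟩ hp' h
      simp only [Finset.coe_filter, Finset.mem_univ, true_and, Set.mem_ofPred_eq] at hp hp'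
      simp only [φ] at h
      split_ifs at h with c1 c2 c2
      · simp only [Prod.mk.injEq, EmbeddingLike.apply_eq_iff_eq] at h
        exact Prod.ext h.1 h.2
      · simp only [Prod.mk.injEq] at h
        rw [← h.1, ← h.2, h4, h4] at c2
        exact absurd hp.1 c2
      · simp only [Prod.mk.injEq] at h
        rw [h.1, h.2, h4, h4] at c1
        exact absurd hp'.1 c1
      · exact h
    · simp only [Finset.mem_image, Finset.mem_filter, Finset.mem_univ, true_and, not_exists, not_and]
      rintro ⟨p, q⟩ hp h
      simp only [φ] at h
      split_ifs at h with c1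
      · simp only [Prod.mk.injEq] at h
        have e1 : p = b := by rw [← h4 p, h.1, h1]
        have e2 : q = a := by rw [← h4 q, h.2, h2]
        simp only [e1, e2] at hp
        exact absurd hp.1 (not_lt.2 hab.le)
      · simp only [Prod.mk.injEq] at h
        rw [h.1, h.2] at hp
        exact absurd hp.2 (not_lt.2 hw.le)
  rw [Nat.succ_eq_add_one, ← hcard]
  apply Finset.card_le_card
  intro x hx
  simp only [Finset.mem_insert, Finset.mem_image, Finset.mem_filter, Finset.mem_univ, true_and] at hx ⊢
  rcases hx with rfl | ⟨⟨p, q⟩, ⟨hp, hp'⟩, rfl⟩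
  · simp [h1, h2, hab, hw]
  · simp only [φ]
    split_ifs with c1
    · simp only [Perm.coe_mul, Function.comp, h4]
      exact ⟨c1, hp'⟩
    · refine ⟨hp, ?_⟩
      simp only [Perm.coe_mul, Function.comp] at hp hp' c1 ⊢
      by_cases e1 : p = a
      · by_cases e2 : q = b
        · subst e1 e2; exact absurd hp' (not_lt.2 hw.le)
        · have e3 : q ≠ a := by rintro rfl; simp [e1] at hp
          rw [e1, h1, h3 q e3 e2]; rw [e1] at hp'; exact hp'.trans hw
      · by_cases e2 : q = b
        · have e3 : p ≠ b := by rintro rfl; simp [e2] at hp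
          rw [e2, h2, h3 p e1 e3]; rw [e2] at hp'; exact hw.trans hp'
        · exfalso
          by_cases e3 : p = b
          · by_cases e4 : q = a
            · subst e3 e4; exact absurd hp (not_lt.2 hab.le)
            · rw [e3, h2, h3 q e4 e2] at c1
              rw [e3] at hp
              exact c1 (hab.trans hp)
          · by_cases e4 : q = a
            · rw [e4, h1, h3 p e1 e3] at c1; rw [e4] at hp; exact c1 (hp.trans hab)
            · rw [h3 p e1 e3, h3 q e4 e2] at c1; exact c1 hp

theorem len_lt_iff {N : ℕ} (w : Equiv.Perm (Fin N)) {a b : Fin N} (hab : a < b) :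
    len w < len (w * swap a b) ↔ w a < w b := by
  refine ⟨fun h => ?_, len_lt_swap w hab⟩
  by_contra hc
  have : (w * swap a b) a < (w * swap a b) b := by
    simp only [Perm.coe_mul, Function.comp, swap_apply_left, swap_apply_right]
    exact lt_of_le_of_ne (not_lt.1 hc) (fun h => hab.ne' (w.injective h))
  have := len_lt_swap (w * swap a b) hab this
  rw [mul_assoc, swap_mul_self, mul_one] at this
  omega

/-- adjacent swap changes length by one -/
theorem len_adj {N : ℕ} (w : Equiv.Perm (Fin N)) {a b : Fin N} (hab : (a : ℕ) + 1 = b)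
    (hw : w a < w b) : len (w * swap a b) = len w + 1 := by
  have hlt : a < b := by rw [Fin.lt_def]; omega
  refine le_antisymm ?_ (len_lt_swap w hlt hw)
  unfold len
  set tt := swap a b with htt
  have h1 : tt a = b := swap_apply_left a b
  have h2 : tt b = a := swap_apply_right a b
  have h3 : ∀ c, c ≠ a → c ≠ b → tt c = c := fun c hc hc' => swap_apply_of_ne_of_ne hc hc'
  have h4 : ∀ c, tt (tt c) = c := fun c => by simp [htt]
  rw [← Finset.card_image_of_injective (f := fun p : Fin N × Fin N => (tt p.1, tt p.2))
    (s := Finset.univ.filter fun p : Fin N × Fin N => p.1 < p.2 ∧ w p.2 < w p.1)]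
  · refine le_trans (Finset.card_le_card ?_) (Finset.card_insert_le (a, b) _)
    rintro ⟨p, q⟩ hx
    simp only [Finset.mem_insert, Finset.mem_image, Finset.mem_filter, Finset.mem_univ, true_and,
      Prod.mk.injEq] at hx ⊢
    obtain ⟨hp, hp'⟩ := hx
    by_cases hpq : p = a ∧ q = b
    · exact Or.inl hpq
    · refine Or.inr ⟨(tt p, tt q), ⟨?_, by simpa using hp'⟩, h4 p, h4 q⟩
      by_cases e1 : p = a
      · have e3 : q ≠ a := by rintro rfl; simp [e1] at hp
        have e2 : q ≠ b := fun e => hpq ⟨e1, e⟩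
        simp only [e1, h1, h3 q e3 e2]
        rw [e1] at hp
        rw [Fin.lt_def] at hp ⊢
        have := Fin.val_ne_of_ne e2
        omega
      · by_cases e2 : q = b
        · have e3 : p ≠ b := by rintro rfl; simp [e2] at hp
          simp only [e2, h2, h3 p e1 e3]
          rw [e2] at hp
          rw [Fin.lt_def] at hp ⊢
          have := Fin.val_ne_of_ne e1
          omega
        · by_cases e3 : p = b
          · by_cases e4 : q = a
            · subst e3 e4; exact absurd hp (not_lt.2 hlt.le)
            · simp only [e3, h2, h3 q e4 e2]
              rw [e3] at hp
              exact hlt.trans hp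
          · by_cases e4 : q = a
            · simp only [e4, h1, h3 p e1 e3]; rw [e4] at hp; exact hp.trans hlt
            · simp only [h3 p e1 e3, h3 q e4 e2]; exact hp
  · rintro ⟨p, q⟩ ⟨p', q'⟩ h
    simpa using h

theorem len_adj' {N : ℕ} (w : Equiv.Perm (Fin N)) {a b : Fin N} (hab : (a : ℕ) + 1 = b)
    (hw : w b < w a) : len w = len (w * swap a b) + 1 := by
  have := len_adj (w * swap a b) hab (by simpa using hw)
  rwa [mul_assoc, swap_mul_self, mul_one] at this

theorem len_le {N : ℕ} (w : Equiv.Perm (Fin N)) : len w ≤ N * N := by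
  unfold len
  refine (Finset.card_le_univ _).trans ?_
  simp

end

section
/-- States: a permutation together with the set of used leaves. -/
abbrev St (N : ℕ) := Equiv.Perm (Fin N) × Finset (Fin N)

/-- Operators on functions of states. -/
abbrev Op (K : Type) [CommRing K] (N : ℕ) := Module.End K (St N → K)

variable {K : Type} [CommRing K] {N : ℕ}

/-- The Bruhat step operator. -/
noncomputable def opT (K : Type) [CommRing K] {N : ℕ} (a b : Fin N) : Op K N where
  toFun F := fun s => if len (s.1 * swap a b) = len s.1 + 1 then F (s.1 * swap a b, s.2) else 0
  map_add' F G := by ext s; simp only [Pi.add_apply]; split_ifs <;> simp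
  map_smul' r F := by ext s; simp

/-- The leaf marking operator. -/
noncomputable def opY (K : Type) [CommRing K] {N : ℕ} (b : Fin N) : Op K N where
  toFun F := fun s => if b ∈ s.2 then 0 else F (s.1, insert b s.2)
  map_add' F G := by ext s; simp only [Pi.add_apply]; split_ifs <;> simp
  map_smul' r F := by ext s; simp

/-- The leaf counting operator. -/
noncomputable def opN (K : Type) [CommRing K] {N : ℕ} (b : Fin N) : Op K N where
  toFun F := fun s => if b ∈ s.2 then F s else 0
  map_add' F G := by ext s; simp only [Pi.add_apply]; split_ifs <;> simp
  map_smul' r F := by ext s; simp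

theorem opT_apply (a b : Fin N) (F : St N → K) (s : St N) : opT K a b F s =
    if len (s.1 * swap a b) = len s.1 + 1 then F (s.1 * swap a b, s.2) else 0 := rfl
theorem opY_apply (b : Fin N) (F : St N → K) (s : St N) : opY K b F s =
    if b ∈ s.2 then 0 else F (s.1, insert b s.2) := rfl
theorem opN_apply (b : Fin N) (F : St N → K) (s : St N) : opN K b F s =
    if b ∈ s.2 then F s else 0 := rfl

theorem comm_YT (c a b : Fin N) : Commute (opY K c) (opT K a b) := by
  refine LinearMap.ext fun F => funext fun s => ?_
  simp only [Module.End.mul_apply, opT_apply, opY_apply]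
  split_ifs <;> rfl

theorem comm_NT (c a b : Fin N) : Commute (opN K c) (opT K a b) := by
  refine LinearMap.ext fun F => funext fun s => ?_
  simp only [Module.End.mul_apply, opT_apply, opN_apply]
  split_ifs <;> rfl

theorem comm_YY (c d : Fin N) : Commute (opY K c) (opY K d) := by
  refine LinearMap.ext fun F => funext fun s => ?_
  simp only [Module.End.mul_apply, opY_apply, Finset.mem_insert]
  by_cases h : c = d
  · subst h; rfl
  · have h' : ¬ d = c := fun e => h e.symm
    by_cases h1 : c ∈ s.2 <;> by_cases h2 : d ∈ s.2 <;> simp [h, h', h1, h2, Finset.insert_comm]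

theorem YY (c : Fin N) : opY K c * opY K c = 0 := by
  refine LinearMap.ext fun F => funext fun s => ?_
  simp [opY_apply]

theorem YN_same (c : Fin N) : opY K c * opN K c - opN K c * opY K c = opY K c := by
  refine LinearMap.ext fun F => funext fun s => ?_
  simp only [LinearMap.sub_apply, Pi.sub_apply, Module.End.mul_apply, opY_apply, opN_apply,
    Finset.mem_insert]
  by_cases h1 : c ∈ s.2 <;> simp [h1]

theorem YN_ne {c d : Fin N} (h : c ≠ d) : Commute (opY K c) (opN K d) := by
  have h' : ¬ d = c := fun e => h e.symm
  refine LinearMap.ext fun F => funext fun s => ?_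
  simp only [Module.End.mul_apply, opY_apply, opN_apply, Finset.mem_insert]
  by_cases h1 : c ∈ s.2 <;> by_cases h2 : d ∈ s.2 <;> simp [h', h1, h2]

theorem comm_TT {a b c d : Fin N} (hab : a < b) (hcd : c < d) (h1 : a ≠ c) (h2 : a ≠ d)
    (h3 : b ≠ c) (h4 : b ≠ d) : Commute (opT K a b) (opT K c d) := by
  refine LinearMap.ext fun F => funext fun s => ?_
  simp only [Module.End.mul_apply, opT_apply]
  have hcomm : s.1 * swap a b * swap c d = s.1 * swap c d * swap a b := by
    rw [mul_assoc, mul_assoc]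
    congr 1
    apply Perm.Disjoint.commute
    rw [Perm.disjoint_iff_disjoint_support, Perm.support_swap hab.ne, Perm.support_swap hcd.ne]
    simp [h1, h2, h3, h4, Ne.symm]
  have e1 := len_lt_iff s.1 hab
  have e2 := len_lt_iff s.1 hcd
  have e3 := len_lt_iff (s.1 * swap a b) hcd
  have e4 := len_lt_iff (s.1 * swap c d) hab
  simp only [Perm.coe_mul, Function.comp, swap_apply_of_ne_of_ne h1 h2,
    swap_apply_of_ne_of_ne h3 h4, swap_apply_of_ne_of_ne h1.symm h3.symm,
    swap_apply_of_ne_of_ne h2.symm h4.symm] at e3 e4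
  rw [← e2] at e3
  rw [← e1] at e4
  rw [hcomm] at e3 ⊢
  split_ifs <;> first | rfl | omega

theorem TT_rel {a k c : Fin N} (hak : a < k) (hkc : k < c) :
    opT K k c * opT K a k = opT K a c * opT K k c + opT K a k * opT K a c := by
  refine LinearMap.ext fun F => funext fun s => ?_
  have hac := hak.trans hkc
  simp only [Module.End.mul_apply, opT_apply, LinearMap.add_apply, Pi.add_apply]
  have p1 : s.1 * swap a c * swap k c = s.1 * swap k c * swap a k := by
    rw [mul_assoc, mul_assoc]; congr 1
    ext x
    simp only [Perm.coe_mul, Function.comp, swap_apply_def]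
    grind
  have p2 : s.1 * swap a k * swap a c = s.1 * swap k c * swap a k := by
    rw [mul_assoc, mul_assoc]; congr 1
    ext x
    simp only [Perm.coe_mul, Function.comp, swap_apply_def]
    grind
  have e1 := len_lt_iff s.1 hak
  have e2 := len_lt_iff s.1 hkc
  have e3 := len_lt_iff s.1 hac
  have e4 := len_lt_iff (s.1 * swap k c) hak
  have e5 := len_lt_iff (s.1 * swap a c) hkc
  have e6 := len_lt_iff (s.1 * swap a k) hac
  have ne1 : s.1 a ≠ s.1 k := fun h => hak.ne (s.1.injective h)
  simp only [Perm.coe_mul, Function.comp, swap_apply_left, swap_apply_right,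
    swap_apply_of_ne_of_ne hak.ne hac.ne, swap_apply_of_ne_of_ne hak.ne' hkc.ne,
    swap_apply_of_ne_of_ne hac.ne' hkc.ne'] at e4 e5 e6
  rw [p1] at e5
  rw [p2] at e6
  rw [p1, p2]
  generalize F (s.1 * swap k c * swap a k, s.2) = x
  generalize len (s.1 * swap k c * swap a k) = l at *
  generalize len (s.1 * swap k c) = l1 at *
  generalize len (s.1 * swap a c) = l2 at *
  generalize len (s.1 * swap a k) = l3 at *
  generalize len s.1 = l0 at *
  generalize s.1 a = u at *
  generalize s.1 k = v at *
  generalize s.1 c = z at *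
  rw [Fin.lt_def] at e1 e2 e3 e4 e5 e6
  have ne2 := Fin.val_ne_of_ne ne1
  split_ifs <;> first | (simp; done) | (exfalso; omega)

end

section
variable {K : Type} [CommRing K] {N : ℕ}

/-- Marked step operator with center `a` and leaves in `L`. -/
noncomputable def opD (K : Type) [CommRing K] {N : ℕ} (L : Finset (Fin N)) (a : Fin N) : Op K N :=
  ∑ c ∈ L, opY K c * opT K a c

/-- The star operator, inverse of `1 - opD`. -/
noncomputable def opR (K : Type) [CommRing K] {N : ℕ} (L : Finset (Fin N)) (a : Fin N) : Op K N :=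
  ∑ i ∈ Finset.range (N + 1), opD K L a ^ i

theorem opD_apply (L : Finset (Fin N)) (a : Fin N) (F : St N → K) (s : St N) :
    opD K L a F s = ∑ c ∈ L, if c ∈ s.2 then 0 else
      if len (s.1 * swap a c) = len s.1 + 1 then F (s.1 * swap a c, insert c s.2) else 0 := by
  simp only [opD, LinearMap.sum_apply, Finset.sum_apply, Module.End.mul_apply, opY_apply, opT_apply]

theorem opD_pow_vanish (L : Finset (Fin N)) (a : Fin N) (j : ℕ) : ∀ (F : St N → K) (s : St N),
    N < j + s.2.card → (opD K L a ^ j) F s = 0 ∨ j = 0 := by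
  induction j with
  | zero => intro F s _; exact Or.inr rfl
  | succ j ih =>
    intro F s hs
    left
    rw [pow_succ', Module.End.mul_apply, opD_apply]
    apply Finset.sum_eq_zero
    intro c _
    split_ifs with h1 h2
    · rfl
    · have hc : (insert c s.2).card = s.2.card + 1 := Finset.card_insert_of_notMem h1
      rcases ih F (s.1 * swap a c, insert c s.2) (by simp only [hc]; omega) with h | h
      · exact h
      · subst h
        have := Finset.card_le_univ (insert c s.2)
        simp only [Fintype.card_fin] at this
        omega
    · rfl

theorem opD_nilp (L : Finset (Fin N)) (a : Fin N) : opD K L a ^ (N + 1) = 0 := by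
  refine LinearMap.ext fun F => funext fun s => ?_
  rcases opD_pow_vanish L a (N + 1) F s (by omega) with h | h
  · exact h
  · omega

theorem opR_mul (L : Finset (Fin N)) (a : Fin N) : opR K L a * (1 - opD K L a) = 1 := by
  have := geom_sum_mul_neg (opD K L a) (N + 1)
  rw [opD_nilp, sub_zero] at this
  exact this

theorem mul_opR (L : Finset (Fin N)) (a : Fin N) : (1 - opD K L a) * opR K L a = 1 := by
  have := mul_neg_geom_sum (opD K L a) (N + 1)
  rw [opD_nilp, sub_zero] at this
  exact this

theorem comm_R_of_D {L : Finset (Fin N)} {a : Fin N} {Z : Op K N} (h : Commute (opD K L a) Z) :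
    Commute (opR K L a) Z := by
  unfold opR
  exact Commute.sum_left _ _ _ fun i _ => h.pow_left i

theorem comm_D_of {L : Finset (Fin N)} {a : Fin N} {Z : Op K N}
    (h : ∀ c ∈ L, Commute (opY K c * opT K a c) Z) : Commute (opD K L a) Z :=
  Commute.sum_left _ _ _ h

theorem comm_yT_yT {a b c d : Fin N} (hac : a < c) (hbd : b < d) (hab : a ≠ b)
    (had : a ≠ d) (hcb : c ≠ b) : Commute (opY K c * opT K a c) (opY K d * opT K b d) := by
  by_cases h : c = d
  · subst h
    have e : ∀ x y : Fin N, opY K c * opT K x c * (opY K c * opT K y c) = 0 := by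
      intro x y
      rw [mul_assoc, ← mul_assoc (opT K x c), ← (comm_YT c x c).eq, mul_assoc (opY K c), ← mul_assoc,
        YY, zero_mul]
    rw [Commute, SemiconjBy, e, e]
  · have h1 := comm_TT (K := K) hac hbd hab had hcb h
    have h2 := comm_YY (K := K) c d
    exact (h2.mul_right (comm_YT c b d)).mul_left ((comm_YT d a c).symm.mul_right h1)

/-- `y_c T_{b c}` commutes with `R_a`. -/
theorem comm_R_yT {L : Finset (Fin N)} {a b d : Fin N} (hL : ∀ c ∈ L, a < c ∧ c ≠ b) (hbd : b < d)
    (hab : a ≠ b) (had : a ≠ d) : Commute (opR K L a) (opY K d * opT K b d) :=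
  comm_R_of_D <| comm_D_of fun c hc => comm_yT_yT (hL c hc).1 hbd hab had (hL c hc).2

theorem comm_R_T {L : Finset (Fin N)} {a b d : Fin N} (hL : ∀ c ∈ L, a < c ∧ c ≠ b ∧ c ≠ d)
    (hbd : b < d) (hab : a ≠ b) (had : a ≠ d) : Commute (opR K L a) (opT K b d) :=
  comm_R_of_D <| comm_D_of fun c hc => (comm_YT c b d).mul_left
    (comm_TT (hL c hc).1 hbd hab had (hL c hc).2.1 (hL c hc).2.2)

theorem comm_R_Y {L : Finset (Fin N)} {a b : Fin N} : Commute (opR K L a) (opY K b) :=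
  comm_R_of_D <| comm_D_of fun c _ => (comm_YY c b).mul_left (comm_YT b a c).symm

theorem comm_R_N {L : Finset (Fin N)} {a b : Fin N} (hb : b ∉ L) :
    Commute (opR K L a) (opN K b) :=
  comm_R_of_D <| comm_D_of fun c hc => (YN_ne (by rintro rfl; exact hb hc)).mul_left
    (comm_NT b a c).symm

theorem comm_R_R {L : Finset (Fin N)} {a b : Fin N} (hL : ∀ c ∈ L, a < c ∧ b < c)
    : Commute (opR K L a) (opR K L b) := by
  by_cases hab : a = b
  · subst hab; exact Commute.refl _
  · refine comm_R_of_D (Commute.symm ?_)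
    refine comm_R_of_D (comm_D_of fun c hc => Commute.symm (comm_D_of fun d hd => ?_))
    exact comm_yT_yT (hL d hd).1 (hL c hc).2 hab (hL c hc).1.ne (hL d hd).2.ne'

/-- Derivation property. -/
theorem brk_D {L : Finset (Fin N)} {a c : Fin N} (hc : c ∈ L) :
    opD K L a * opN K c - opN K c * opD K L a = opY K c * opT K a c := by
  unfold opD
  rw [Finset.sum_mul, Finset.mul_sum, ← Finset.sum_sub_distrib, Finset.sum_eq_single c]
  · rw [mul_assoc, ← (comm_NT c a c).eq, ← mul_assoc, ← mul_assoc, ← sub_mul, YN_same]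
  · intro d _ hd
    rw [sub_eq_zero]
    exact (YN_ne hd).mul_left (comm_NT c a d).symm
  · exact fun h => absurd hc h

theorem brk_R {L : Finset (Fin N)} {a c : Fin N} (hc : c ∈ L) :
    opR K L a * opN K c - opN K c * opR K L a =
      opR K L a * (opY K c * opT K a c) * opR K L a := by
  rw [← brk_D (K := K) (a := a) hc]
  have h1 := opR_mul (K := K) L a
  have h2 := mul_opR (K := K) L a
  set R := opR K L a
  set D := opD K L a
  set n := opN K c
  have e1 : R * D = R - 1 := by rw [mul_sub, mul_one] at h1; rw [← h1]; abel
  have e2 : D * R = R - 1 := by rw [sub_mul, one_mul] at h2; rw [← h2]; abel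
  have : R * (D * n - n * D) * R = (R * D) * n * R - R * n * (D * R) := by (simp only [mul_add, add_mul, mul_sub, sub_mul, mul_assoc, one_mul, mul_one, zero_mul, mul_zero]; try abel)
  rw [this, e1, e2]; (simp only [mul_add, add_mul, mul_sub, sub_mul, mul_assoc, one_mul, mul_one, zero_mul, mul_zero]; try abel)

/-- `[R_k,n_c] T_{kc} = 0` -/
theorem TRT {L : Finset (Fin N)} {k c : Fin N} (hL : ∀ d ∈ L, k < d) (hc : c ∈ L) :
    opT K k c * (opR K L k * opT K k c) = 0 := by
  have key : ∀ i : ℕ, ∀ F : St N → K, ∀ s : St N, s.1 c < s.1 k →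
      (opD K L k ^ i) (opT K k c F) s = 0 := by
    intro i
    induction i with
    | zero =>
      intro F s hs
      simp only [pow_zero, Module.End.one_apply, opT_apply]
      rw [if_neg]
      intro h
      have := (len_lt_iff s.1 (hL c hc)).1 (by omega)
      exact absurd this (not_lt.2 hs.le)
    | succ i ih =>
      intro F s hs
      rw [pow_succ', Module.End.mul_apply, opD_apply]
      refine Finset.sum_eq_zero fun d hd => ?_
      split_ifs with h1 h2
      · rfl
      · have hlt := (len_lt_iff s.1 (hL d hd)).1 (by omega)
        apply ih
        have hdc : c ≠ d := by rintro rfl; exact absurd hs (not_lt.2 hlt.le)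
        simp only [Perm.coe_mul, Function.comp, swap_apply_left,
          swap_apply_of_ne_of_ne (hL c hc).ne' hdc]
        exact hs.trans hlt
      · rfl
  refine LinearMap.ext fun F => funext fun s => ?_
  rw [Module.End.mul_apply, Module.End.mul_apply, opT_apply]
  split_ifs with h
  · simp only [opR, LinearMap.sum_apply, Finset.sum_apply]
    refine Finset.sum_eq_zero fun i _ => key i F _ ?_
    have := (len_lt_iff s.1 (hL c hc)).1 (by omega)
    simpa using this
  · rfl

/-- Adding a leaf. -/
theorem opR_insert {L : Finset (Fin N)} {a k : Fin N} (hk : k ∉ L) :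
    opR K (insert k L) a = opR K L a + opY K k * (opR K L a * opT K a k * opR K L a) := by
  have hD : opD K (insert k L) a = opY K k * opT K a k + opD K L a := by
    unfold opD; rw [Finset.sum_insert hk]
  have h1 := opR_mul (K := K) (insert k L) a
  have h2 := mul_opR (K := K) L a
  have hc : Commute (opD K L a) (opY K k) :=
    comm_D_of fun c _ => (comm_YY c k).mul_left (comm_YT k a c).symm
  have hY := YY (K := K) k
  have hYT := comm_YT (K := K) k a k
  rw [hD] at h1
  set R' := opR K (insert k L) a
  set R := opR K L a
  set D := opD K L a
  set Y := opY K k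
  set T := opT K a k
  have key : (1 - (Y * T + D)) * (R + Y * (R * T * R)) = 1 := by
    have : (1 - (Y * T + D)) * (R + Y * (R * T * R)) =
      (1 - D) * R - Y * (T * R) + Y * (R * T * R) - (D * Y) * (R * T * R)
        - (Y * T) * Y * (R * T * R) := by (simp only [mul_add, add_mul, mul_sub, sub_mul, mul_assoc, one_mul, mul_one, zero_mul, mul_zero]; try abel)
    rw [this, hc.eq]
    have e0 : Y * T * Y = 0 := by rw [mul_assoc, ← hYT.eq, ← mul_assoc, hY, zero_mul]
    have : (1 - D) * R - Y * (T * R) + Y * (R * T * R) - (Y * D) * (R * T * R)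
        - (Y * T) * Y * (R * T * R) = (1 - D) * R - Y * (T * R) + Y * (((1 - D) * R) * T * R)
        - (Y * T * Y) * (R * T * R) := by (simp only [mul_add, add_mul, mul_sub, sub_mul, mul_assoc, one_mul, mul_one, zero_mul, mul_zero]; try abel)
    rw [this, h2, e0]; (simp only [mul_add, add_mul, mul_sub, sub_mul, mul_assoc, one_mul, mul_one, zero_mul, mul_zero]; try abel)
  calc R' = R' * ((1 - (Y * T + D)) * (R + Y * (R * T * R))) := by rw [key, mul_one]
    _ = _ := by rw [← mul_assoc, h1, one_mul]

/-- The two-center identity. -/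
theorem two_center {L : Finset (Fin N)} {a k : Fin N} (hak : a < k) (hL : ∀ c ∈ L, k < c) :
    opR K L a * opT K a k * opR K L a = opR K L a * opR K L k * opT K a k -
      ∑ c ∈ L, (opR K L a * opN K c - opN K c * opR K L a) * opR K L k * opT K k c := by
  have hQ : opD K L k * opT K a k = opT K a k * opD K L a +
      ∑ c ∈ L, opY K c * opT K a c * opT K k c := by
    unfold opD
    rw [Finset.sum_mul, Finset.mul_sum, ← Finset.sum_add_distrib]
    refine Finset.sum_congr rfl fun c hc => ?_
    rw [mul_assoc, TT_rel hak (hL c hc), ← mul_assoc, ← (comm_YT c a k).eq]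
    (simp only [mul_add, add_mul, mul_sub, sub_mul, mul_assoc, one_mul, mul_one, zero_mul, mul_zero]; try abel)
  have hL1 : ∀ c ∈ L, a < c ∧ k < c := fun c hc => ⟨hak.trans (hL c hc), hL c hc⟩
  have hterm : ∀ c ∈ L, (opR K L a * opN K c - opN K c * opR K L a) * opR K L k * opT K k c =
      opR K L a * opR K L k * (opY K c * opT K a c * opT K k c) * opR K L a := by
    intro c hc
    rw [brk_R hc]
    have c1 : Commute (opR K L a) (opY K c * opT K k c) :=
      comm_R_yT (fun d hd => ⟨(hL1 d hd).1, (hL d hd).ne'⟩) (hL c hc) hak.ne (hL1 c hc).1.ne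
    have c2 : Commute (opR K L k) (opY K c * opT K a c) :=
      comm_R_yT (fun d hd => ⟨hL d hd, (hL1 d hd).1.ne'⟩) (hL1 c hc).1 hak.ne' (hL c hc).ne
    have c3 : Commute (opR K L a) (opR K L k) := comm_R_R hL1
    have c4 := comm_YT (K := K) c a c
    have c5 : Commute (opR K L a) (opY K c) := comm_R_Y
    have c6 : Commute (opR K L k) (opY K c) := comm_R_Y
    set R := opR K L a
    set S := opR K L k
    set Y := opY K c
    set T := opT K a c
    set U := opT K k c
    calc R * (Y * T) * R * S * U = R * (Y * T) * (R * S) * U := by (simp only [mul_add, add_mul, mul_sub, sub_mul, mul_assoc, one_mul, mul_one, zero_mul, mul_zero]; try abel)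
      _ = R * ((Y * T) * S) * R * U := by rw [c3.eq]; (simp only [mul_add, add_mul, mul_sub, sub_mul, mul_assoc, one_mul, mul_one, zero_mul, mul_zero]; try abel)
      _ = R * S * (Y * T) * R * U := by rw [← c2.eq]; (simp only [mul_add, add_mul, mul_sub, sub_mul, mul_assoc, one_mul, mul_one, zero_mul, mul_zero]; try abel)
      _ = R * S * T * (Y * R) * U := by rw [c4.eq]; (simp only [mul_add, add_mul, mul_sub, sub_mul, mul_assoc, one_mul, mul_one, zero_mul, mul_zero]; try abel)
      _ = R * S * T * (R * (Y * U)) := by rw [← c5.eq]; (simp only [mul_add, add_mul, mul_sub, sub_mul, mul_assoc, one_mul, mul_one, zero_mul, mul_zero]; try abel)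
      _ = R * S * (T * Y) * U * R := by rw [c1.eq]; (simp only [mul_add, add_mul, mul_sub, sub_mul, mul_assoc, one_mul, mul_one, zero_mul, mul_zero]; try abel)
      _ = _ := by rw [← c4.eq]; (simp only [mul_add, add_mul, mul_sub, sub_mul, mul_assoc, one_mul, mul_one, zero_mul, mul_zero]; try abel)
  rw [Finset.sum_congr rfl hterm, ← Finset.sum_mul, ← Finset.mul_sum]
  have h1 := opR_mul (K := K) L k
  have h2 := mul_opR (K := K) L a
  set Q := ∑ c ∈ L, opY K c * opT K a c * opT K k c
  set R := opR K L a
  set S := opR K L k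
  set T := opT K a k
  set D := opD K L a
  set D' := opD K L k
  have e : T * R = S * T - S * Q * R := by
    have : S * ((1 - D') * T) * R = S * (T * (1 - D) - Q) * R := by
      congr 2
      rw [sub_mul, hQ]; (simp only [mul_add, add_mul, mul_sub, sub_mul, mul_assoc, one_mul, mul_one, zero_mul, mul_zero]; try abel)
    calc T * R = (S * (1 - D')) * T * R := by rw [h1, one_mul]
      _ = S * (T * (1 - D) - Q) * R := by rw [← this]; (simp only [mul_add, add_mul, mul_sub, sub_mul, mul_assoc, one_mul, mul_one, zero_mul, mul_zero]; try abel)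
      _ = S * T * ((1 - D) * R) - S * Q * R := by (simp only [mul_add, add_mul, mul_sub, sub_mul, mul_assoc, one_mul, mul_one, zero_mul, mul_zero]; try abel)
      _ = _ := by rw [h2]; (simp only [mul_add, add_mul, mul_sub, sub_mul, mul_assoc, one_mul, mul_one, zero_mul, mul_zero]; try abel)
  rw [mul_assoc, e]; (simp only [mul_add, add_mul, mul_sub, sub_mul, mul_assoc, one_mul, mul_one, zero_mul, mul_zero]; try abel)

end

section
variable {K : Type} [CommRing K] {N : ℕ}

/-- product of star operators over a list of centers -/
noncomputable def opP (K : Type) [CommRing K] {N : ℕ} (L : Finset (Fin N)) (A : List (Fin N)) :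
    Op K N := (A.map (opR K L)).prod

theorem comm_P_of {L : Finset (Fin N)} {A : List (Fin N)} {Z : Op K N}
    (h : ∀ a ∈ A, Commute (opR K L a) Z) : Commute (opP K L A) Z := by
  unfold opP
  apply Commute.list_prod_left
  intro x hx
  obtain ⟨a, ha, rfl⟩ := List.mem_map.1 hx
  exact h a ha

theorem list_identity {L : Finset (Fin N)} {k : Fin N} (hL : ∀ c ∈ L, k < c) (A : List (Fin N))
    (hA : ∀ a ∈ A, a < k) (hnd : A.Nodup) :
    opP K (insert k L) A = opP K L A + opY K k * (opP K L A * opR K L k *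
      (A.map fun a => opT K a k).sum - ∑ c ∈ L, (opP K L A * opN K c - opN K c * opP K L A) *
        (opR K L k * opT K k c)) := by
  have hk : k ∉ L := fun h => lt_irrefl _ (hL k h)
  induction A with
  | nil => simp [opP]
  | cons a A ih =>
    have hak : a < k := hA a (by simp)
    have hA' : ∀ b ∈ A, b < k := fun b hb => hA b (by simp [hb])
    have hne : ∀ b ∈ A, b ≠ a := fun b hb => by
      rintro rfl; exact (List.nodup_cons.1 hnd).1 hb
    have IH := ih hA' (List.nodup_cons.1 hnd).2
    have e1 : ∀ L' : Finset (Fin N), opP K L' (a :: A) = opR K L' a * opP K L' A := fun L' => by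
      simp [opP]
    rw [e1, e1, IH, opR_insert hk, List.map_cons, List.sum_cons]
    have hL1 : ∀ c ∈ L, a < c := fun c hc => hak.trans (hL c hc)
    have cT : Commute (opP K L A) (opT K a k) := comm_P_of fun b hb => comm_R_T
      (fun c hc => ⟨(hA' b hb).trans (hL c hc), (hL1 c hc).ne', (hL c hc).ne'⟩) hak (hne b hb)
      (hA' b hb).ne
    have cS : Commute (opP K L A) (opR K L k) := comm_P_of fun b hb => comm_R_R
      fun c hc => ⟨(hA' b hb).trans (hL c hc), hL c hc⟩
    have cYP : ∀ c, Commute (opP K L A) (opY K c) := fun c => comm_P_of fun b hb => comm_R_Y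
    have cYU : ∀ c ∈ L, Commute (opP K L A) (opY K c * opT K k c) := fun c hc =>
      comm_P_of fun b hb => comm_R_yT
        (fun d hd => ⟨(hA' b hb).trans (hL d hd), (hL d hd).ne'⟩) (hL c hc) (hA' b hb).ne
        ((hA' b hb).trans (hL c hc)).ne
    have claim : opR K L a * opT K a k * opR K L a * opP K L A =
        opR K L a * opP K L A * opR K L k * opT K a k -
        ∑ c ∈ L, (opR K L a * opN K c - opN K c * opR K L a) * opP K L A *
          (opR K L k * opT K k c) := by
      rw [two_center hak hL, sub_mul, Finset.sum_mul]
      congr 1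
      · rw [mul_assoc, ← cT.eq, mul_assoc, ← mul_assoc (opR K L k), ← cS.eq]
        simp only [mul_assoc]
      · refine Finset.sum_congr rfl fun c hc => ?_
        rw [brk_R hc]
        have c1 := cYU c hc
        have c2 := cYP c
        have c3 : Commute (opR K L a) (opY K c) := comm_R_Y
        have c4 : Commute (opR K L k) (opY K c) := comm_R_Y
        have c5 := comm_YT (K := K) c a c
        set R := opR K L a
        set S := opR K L k
        set Y := opY K c
        set T := opT K a c
        set U := opT K k c
        set P := opP K L A
        have h1 : R * (Y * T) * R * S = R * T * R * S * Y := by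
          rw [c5.eq, mul_assoc _ S Y, c4.eq]
          simp only [mul_assoc]
          rw [← mul_assoc R Y, c3.eq]
          simp only [mul_assoc]
        have h2 : R * (Y * T) * R * P = R * T * R * P * Y := by
          rw [c5.eq, mul_assoc _ P Y, c2.eq]
          simp only [mul_assoc]
          rw [← mul_assoc R Y, c3.eq]
          simp only [mul_assoc]
        rw [h1, h2]
        calc R * T * R * S * Y * U * P = R * T * R * S * ((Y * U) * P) := by simp only [mul_assoc]
          _ = R * T * R * (S * P) * (Y * U) := by rw [← c1.eq]; simp only [mul_assoc]
          _ = R * T * R * P * (S * Y) * U := by rw [← cS.eq]; simp only [mul_assoc]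
          _ = _ := by rw [c4.eq]; simp only [mul_assoc]
    have cRY : Commute (opR K L a) (opY K k) := comm_R_Y
    have cTY : Commute (opY K k) (opT K a k) := comm_YT k a k
    have hYY := YY (K := K) k
    have hsum : ∑ c ∈ L, (opR K L a * opP K L A * opN K c - opN K c * (opR K L a * opP K L A)) *
        (opR K L k * opT K k c) = opR K L a * ∑ c ∈ L, (opP K L A * opN K c - opN K c * opP K L A) *
        (opR K L k * opT K k c) + ∑ c ∈ L, (opR K L a * opN K c - opN K c * opR K L a) * opP K L A *
          (opR K L k * opT K k c) := by
      rw [Finset.mul_sum, ← Finset.sum_add_distrib]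
      refine Finset.sum_congr rfl fun c hc => ?_
      simp only [mul_assoc, sub_mul, mul_sub]
      abel
    rw [hsum]
    generalize (∑ c ∈ L, (opR K L a * opN K c - opN K c * opR K L a) * opP K L A *
          (opR K L k * opT K k c)) = Z1 at *
    generalize (∑ c ∈ L, (opP K L A * opN K c - opN K c * opP K L A) *
        (opR K L k * opT K k c)) = Z2 at *
    set R := opR K L a
    set S := opR K L k
    set Y := opY K k
    set T := opT K a k
    set P := opP K L A
    set TS := (A.map fun a => opT K a k).sum
    have h0 : Y * (R * T * R) * Y = 0 := by
      have : Commute (R * T * R) Y := (cRY.mul_left cTY.symm).mul_left cRY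
      rw [mul_assoc, this.eq, ← mul_assoc, hYY, zero_mul]
    calc (R + Y * (R * T * R)) * (P + Y * (P * S * TS - Z2))
        = R * P + (R * Y) * (P * S * TS - Z2) + Y * (R * T * R * P) +
          (Y * (R * T * R) * Y) * (P * S * TS - Z2) := by
          simp only [mul_assoc, add_mul, mul_add]; abel
      _ = R * P + Y * R * (P * S * TS - Z2) + Y * (R * P * S * T - Z1) := by
          rw [h0, claim, cRY.eq, zero_mul, add_zero]
      _ = _ := by
          simp only [mul_assoc, add_mul, mul_add, mul_sub, sub_mul]; abel

/-- final functions -/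
def finF (S : Equiv.Perm (Fin N) → K) (m : ℕ) : St N → K :=
  fun s => if s.2.card = m then S s.1 else 0

theorem opY_finF (S : Equiv.Perm (Fin N) → K) (m : ℕ) (c : Fin N) :
    opY K c (finF S (m + 1)) = finF S m - opN K c (finF S m) := by
  funext s
  simp only [opY_apply, Pi.sub_apply, opN_apply]
  split_ifs with h
  · simp
  · simp [finF, Finset.card_insert_of_notMem h]

theorem rec_step {L : Finset (Fin N)} {k : Fin N} (hL : ∀ c ∈ L, k < c) (A : List (Fin N))
    (hA : ∀ a ∈ A, a < k) (hnd : A.Nodup) (S : Equiv.Perm (Fin N) → K) (x : K) (m : ℕ)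
    (monk : (∑ c ∈ L, opT K k c (finF S m)) - (A.map fun a => opT K a k).sum (finF S m) =
      x • finF S m) (w : Equiv.Perm (Fin N)) :
    opP K L (k :: A) (finF S (m + 1)) (w, ∅) = opP K (insert k L) A (finF S (m + 1)) (w, ∅) +
      x * opP K L (k :: A) (finF S m) (w, ∅) := by
  have hk : k ∉ L := fun h => lt_irrefl _ (hL k h)
  have cS : Commute (opP K L A) (opR K L k) := comm_P_of fun b hb => comm_R_R
      fun c hc => ⟨(hA b hb).trans (hL c hc), hL c hc⟩
  have hP : opP K L (k :: A) = opP K L A * opR K L k := by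
    rw [cS.eq]; simp [opP]
  have hx : x * opP K L (k :: A) (finF S m) (w, ∅) =
      (opP K L (k :: A) ((∑ c ∈ L, opT K k c (finF S m)) -
        (A.map fun a => opT K a k).sum (finF S m))) (w, ∅) := by
    rw [monk, map_smul]; rfl
  rw [hx, list_identity hL A hA hnd]
  set G := finF S (m + 1)
  set G' := finF S m
  set TS := (A.map fun a => opT K a k).sum
  -- evaluation of `n_c` at the empty set
  have hN0 : ∀ (c : Fin N) (F : St N → K), opN K c F (w, ∅) = 0 := fun c F => by simp [opN_apply]
  -- the big bracket
  set B := opP K L A * opR K L k * TS - ∑ c ∈ L, (opP K L A * opN K c - opN K c * opP K L A) *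
        (opR K L k * opT K k c) with hB
  have cPN : Commute (opP K L A) (opN K k) := comm_P_of fun b hb => comm_R_N hk
  have cSN : Commute (opR K L k) (opN K k) := comm_R_N hk
  have cTSN : Commute TS (opN K k) := by
    apply Commute.list_sum_left
    intro x hx
    obtain ⟨a, ha, rfl⟩ := List.mem_map.1 hx
    exact (comm_NT k a k).symm
  have cTSY : Commute TS (opY K k) := by
    apply Commute.list_sum_left
    intro x hx
    obtain ⟨a, ha, rfl⟩ := List.mem_map.1 hx
    exact (comm_YT k a k).symm
  have cPY : Commute (opP K L A) (opY K k) := comm_P_of fun b hb => comm_R_Y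
  have cSY : Commute (opR K L k) (opY K k) := comm_R_Y
  have cNN : ∀ c, Commute (opN K c) (opN K k) := fun c => by
    refine LinearMap.ext fun F => funext fun s => ?_
    simp only [Module.End.mul_apply, opN_apply]
    split_ifs <;> rfl
  have cBN : Commute B (opN K k) := by
    refine Commute.sub_left ((cPN.mul_left cSN).mul_left cTSN) (Commute.sum_left _ _ _ fun c hc => ?_)
    exact ((cPN.mul_left (cNN c)).sub_left ((cNN c).mul_left cPN)).mul_left
      (cSN.mul_left (comm_NT k k c).symm)
  have cBY : Commute B (opY K k) := by
    refine Commute.sub_left ((cPY.mul_left cSY).mul_left cTSY) (Commute.sum_left _ _ _ fun c hc => ?_)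
    have cNY : Commute (opN K c) (opY K k) := (YN_ne (by rintro rfl; exact hk hc)).symm
    exact ((cPY.mul_left cNY).sub_left (cNY.mul_left cPY)).mul_left
      (cSY.mul_left (comm_YT k k c).symm)
  have hYB : (opY K k * B) G (w, ∅) = B G' (w, ∅) := by
    rw [← cBY.eq, Module.End.mul_apply, opY_finF, map_sub, Pi.sub_apply]
    have : B (opN K k G') = opN K k (B G') := by
      rw [← Module.End.mul_apply, cBN.eq, Module.End.mul_apply]
    rw [this, hN0, sub_zero]
  have hterm : ∀ c ∈ L, ((opP K L A * opN K c - opN K c * opP K L A) *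
        (opR K L k * opT K k c)) G' (w, ∅) =
        (opP K L (k :: A) (opT K k c (opN K c G'))) (w, ∅) := by
    intro c hc
    have e : (opP K L A * opN K c - opN K c * opP K L A) * (opR K L k * opT K k c) =
        opP K L (k :: A) * opT K k c * opN K c - opN K c * (opP K L (k :: A) * opT K k c) := by
      have h1 : (opR K L k * opN K c - opN K c * opR K L k) * opT K k c = 0 := by
        rw [brk_R hc, mul_assoc, mul_assoc, mul_assoc, TRT hL hc, mul_zero, mul_zero]
      have h2 := comm_NT (K := K) c k c
      rw [hP]
      rw [sub_mul, sub_eq_zero] at h1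
      calc _ = opP K L A * (opN K c * opR K L k * opT K k c) -
            opN K c * (opP K L A * opR K L k * opT K k c) := by
            simp only [mul_assoc, sub_mul]
        _ = _ := by rw [← h1, mul_assoc _ (opT K k c) (opN K c), ← h2.eq]; simp only [mul_assoc]
    rw [e, LinearMap.sub_apply, Pi.sub_apply, Module.End.mul_apply (opN K c), hN0, sub_zero]
    rfl
  have hBG : B G' (w, ∅) = (opP K L (k :: A) (TS G')) (w, ∅) -
      ∑ c ∈ L, (opP K L (k :: A) (opT K k c (opN K c G'))) (w, ∅) := by
    rw [hB, LinearMap.sub_apply, Pi.sub_apply, LinearMap.sum_apply, Finset.sum_apply,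
      Finset.sum_congr rfl hterm, hP]
    rfl
  have hPA : opP K L A G (w, ∅) = opP K L (k :: A) G (w, ∅) -
      ∑ c ∈ L, (opP K L (k :: A) (opT K k c G') (w, ∅) -
        opP K L (k :: A) (opT K k c (opN K c G')) (w, ∅)) := by
    have e : opP K L A = opP K L (k :: A) - ∑ c ∈ L, opP K L (k :: A) * (opT K k c * opY K c) := by
      have h1 := opR_mul (K := K) L k
      have h2 : ∑ c ∈ L, opP K L (k :: A) * (opT K k c * opY K c) =
          opP K L (k :: A) * opD K L k := by
        rw [opD, Finset.mul_sum]
        exact Finset.sum_congr rfl fun c hc => by rw [(comm_YT c k c).eq]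
      rw [h2, hP]
      calc opP K L A = opP K L A * (opR K L k * (1 - opD K L k)) := by rw [h1, mul_one]
        _ = _ := by simp only [mul_sub, mul_one, mul_assoc]
    conv_lhs => rw [e]
    rw [LinearMap.sub_apply, Pi.sub_apply, LinearMap.sum_apply, Finset.sum_apply]
    congr 1
    refine Finset.sum_congr rfl fun c hc => ?_
    simp only [Module.End.mul_apply]
    rw [opY_finF, map_sub, map_sub, Pi.sub_apply]
  rw [LinearMap.add_apply, Pi.add_apply, hYB, hBG, hPA, map_sub, Pi.sub_apply, map_sum,
    Finset.sum_apply, Finset.sum_sub_distrib]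
  abel

end

section
variable {K : Type} [CommRing K] {N : ℕ}

/-- Backward closed sets of states. -/
def Bcl (L : Finset (Fin N)) (A : List (Fin N)) (P : St N → Prop) : Prop :=
  ∀ v B a c, a ∈ A → c ∈ L → c ∉ B → len (v * swap a c) = len v + 1 →
    P (v * swap a c, insert c B) → P (v, B)

theorem opD_supp {L : Finset (Fin N)} {A : List (Fin N)} {P : St N → Prop} (hP : Bcl L A P)
    {a : Fin N} (ha : a ∈ A) {F : St N → K} (hF : ∀ s, ¬ P s → F s = 0) :
    ∀ s, ¬ P s → opD K L a F s = 0 := by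
  rintro ⟨v, B⟩ hs
  rw [opD_apply]
  refine Finset.sum_eq_zero fun c hc => ?_
  split_ifs with h1 h2
  · rfl
  · exact hF _ fun h => hs (hP v B a c ha hc h1 h2 h)
  · rfl

theorem opR_supp {L : Finset (Fin N)} {A : List (Fin N)} {P : St N → Prop} (hP : Bcl L A P)
    {a : Fin N} (ha : a ∈ A) {F : St N → K} (hF : ∀ s, ¬ P s → F s = 0) :
    ∀ s, ¬ P s → opR K L a F s = 0 := by
  intro s hs
  simp only [opR, LinearMap.sum_apply, Finset.sum_apply]
  refine Finset.sum_eq_zero fun i hi => ?_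
  clear hi
  induction i generalizing s with
  | zero => exact hF s hs
  | succ i ih =>
    rw [pow_succ', Module.End.mul_apply]
    exact opD_supp hP ha ih s hs

theorem opP_supp {L : Finset (Fin N)} {A : List (Fin N)} {P : St N → Prop} (hP : Bcl L A P)
    {F : St N → K} (hF : ∀ s, ¬ P s → F s = 0) :
    ∀ s, ¬ P s → opP K L A F s = 0 := by
  suffices H : ∀ A' : List (Fin N), (∀ a ∈ A', a ∈ A) → ∀ s, ¬ P s → opP K L A' F s = 0 from
    H A fun _ h => h
  intro A'
  induction A' with
  | nil => intro _ s hs; simpa [opP] using hF s hs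
  | cons a A' ih =>
    intro h s hs
    have e : opP K L (a :: A') = opR K L a * opP K L A' := by simp [opP]
    rw [e, Module.End.mul_apply]
    exact opR_supp hP (h a (by simp)) (ih fun b hb => h b (by simp [hb])) s hs

/-- States from which `(w', B')` with `|B'| = m` can be reached. -/
inductive Reach (L : Finset (Fin N)) (A : List (Fin N)) (w' : Equiv.Perm (Fin N)) (m : ℕ) :
    Equiv.Perm (Fin N) → Finset (Fin N) → Prop
  | base (B : Finset (Fin N)) : B.card = m → Reach L A w' m w' B
  | step (v : Equiv.Perm (Fin N)) (B : Finset (Fin N)) (a c : Fin N) : a ∈ A → c ∈ L → c ∉ B →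
      len (v * swap a c) = len v + 1 → Reach L A w' m (v * swap a c) (insert c B) →
      Reach L A w' m v B

theorem Reach.of_bcl {L : Finset (Fin N)} {A : List (Fin N)} {w' : Equiv.Perm (Fin N)} {m : ℕ}
    {P : St N → Prop} (hP : Bcl L A P) (h0 : ∀ B, P (w', B)) {v : Equiv.Perm (Fin N)}
    {B : Finset (Fin N)} (h : Reach L A w' m v B) : P (v, B) := by
  induction h with
  | base B _ => exact h0 B
  | step v B a c ha hc hcB hl hR ih => exact hP v B a c ha hc hcB hl ih

/-- Delta function. -/
noncomputable def dlt (K : Type) [CommRing K] {N : ℕ} (w' : Equiv.Perm (Fin N)) (m : ℕ) :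
    St N → K := fun s => if s.1 = w' ∧ s.2.card = m then 1 else 0

theorem bcl_agree (L : Finset (Fin N)) (A : List (Fin N)) (hA : ∀ a ∈ A, a ∉ L)
    (w' : Equiv.Perm (Fin N)) :
    Bcl L A (fun s => s.2 ⊆ L → (∀ b ∈ s.2, s.1 b = w' b) ∧
      ∀ x, x ∉ L → x ∉ A → s.1 x = w' x) := by
  intro v B a c ha hc hcB hl h hB
  obtain ⟨h1, h2⟩ := h (Finset.insert_subset hc hB)
  constructor
  · intro b hb
    have := h1 b (by simp [hb])
    have hba : b ≠ a := by rintro rfl; exact hA _ ha (hB hb)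
    have hbc : b ≠ c := by rintro rfl; exact hcB hb
    simpa [swap_apply_of_ne_of_ne hba hbc] using this
  · intro x hx hxA
    have := h2 x hx hxA
    have hba : x ≠ a := by rintro rfl; exact hxA ha
    have hbc : x ≠ c := by rintro rfl; exact hx hc
    simpa [swap_apply_of_ne_of_ne hba hbc] using this

theorem bcl_len (L : Finset (Fin N)) (A : List (Fin N)) (q : ℕ) :
    Bcl L A (fun s => len s.1 ≤ q) := by
  intro v B a c ha hc hcB hl h
  simp only at h ⊢
  omega

theorem opR_eq (L : Finset (Fin N)) (a : Fin N) : opR K L a = 1 + opD K L a * opR K L a := by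
  have := mul_opR (K := K) L a
  rw [sub_mul, one_mul] at this
  rw [← this]; abel

theorem opP_len {L : Finset (Fin N)} (q : ℕ) {F : St N → K} (hF : ∀ s, ¬ len s.1 ≤ q → F s = 0)
    (s : St N) (hs : len s.1 = q) (A : List (Fin N)) : opP K L A F s = F s := by
  induction A with
  | nil => simp [opP]
  | cons a A ih =>
    have e : opP K L (a :: A) = opR K L a * opP K L A := by simp [opP]
    rw [e, opR_eq, add_mul, one_mul, mul_assoc, ← e, LinearMap.add_apply, Pi.add_apply, ih,
      Module.End.mul_apply, opD_apply, Finset.sum_eq_zero, add_zero]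
    intro c hc
    split_ifs with h1 h2
    · rfl
    · refine opP_supp (bcl_len L (a :: A) q) hF _ ?_
      simp only; omega
    · rfl

theorem opP_erase {L : Finset (Fin N)} {A : List (Fin N)} (hL : ∀ a ∈ A, ∀ c ∈ L, a < c)
    {a : Fin N} (ha : a ∈ A) : opP K L A = opR K L a * opP K L (A.erase a) := by
  have hp := (List.perm_cons_erase ha).map (opR K L)
  have := hp.prod_eq' (by
    rw [List.pairwise_map]
    refine List.Pairwise.imp_of_mem (R := fun _ _ => True) ?_ (List.pairwise_of_forall (by simp))
    intro x y hx hy _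
    exact comm_R_R fun c hc => ⟨hL x hx c hc, hL y hy c hc⟩)
  simpa [opP] using this

theorem opP_dlt {L : Finset (Fin N)} {A : List (Fin N)} (hL : ∀ a ∈ A, ∀ c ∈ L, a < c)
    (hnd : A.Nodup) (w' : Equiv.Perm (Fin N)) (m : ℕ) (v : Equiv.Perm (Fin N))
    (B : Finset (Fin N)) (hB : B ⊆ L) :
    opP K L A (dlt K w' m) (v, B) = if Reach L A w' m v B then 1 else 0 := by
  have hAL : ∀ a ∈ A, a ∉ L := fun a ha h => lt_irrefl _ (hL a ha a h)
  have hagF : ∀ A' : List (Fin N), ∀ s : St N, ¬ (s.2 ⊆ L → (∀ b ∈ s.2, s.1 b = w' b) ∧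
      ∀ x, x ∉ L → x ∉ A' → s.1 x = w' x) → dlt K w' m s = 0 := by
    intro A' s hs
    unfold dlt
    rw [if_neg]
    rintro ⟨h, _⟩
    exact hs fun _ => ⟨fun _ _ => by rw [h], fun _ _ _ => by rw [h]⟩
  split_ifs with hR
  · induction hR with
    | base B hm =>
      rw [opP_len (len w')]
      · simp [dlt, hm]
      · intro s hs
        unfold dlt
        rw [if_neg]
        rintro ⟨h, _⟩
        exact hs (by rw [h])
      · rfl
    | step v B a c ha hc hcB hl hR ih =>
      have hB' := Finset.insert_subset hc hB
      have ih := ih hB'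
      have hag : ∀ {v B}, Reach L A w' m v B → B ⊆ L → ∀ b ∈ B, v b = w' b := by
        intro v B h hB
        exact (h.of_bcl (bcl_agree L A hAL w') (fun B _ => ⟨fun _ _ => rfl, fun _ _ _ => rfl⟩) hB).1
      have hwc : w' c = v a := by
        have := hag hR hB' c (by simp)
        simpa using this.symm
      have hac : a ≠ c := by rintro rfl; exact hAL _ ha hc
      rw [opP_erase hL ha, opR_eq, add_mul, one_mul, mul_assoc, ← opP_erase hL ha,
        LinearMap.add_apply, Pi.add_apply, Module.End.mul_apply, opD_apply,
        Finset.sum_eq_single c]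
      · rw [if_neg hcB, if_pos hl, ih]
        rw [opP_supp (bcl_agree L (A.erase a) (fun x hx => hAL x (List.mem_of_mem_erase hx)) w')
          (hagF _), zero_add]
        intro h
        have h1 := (h hB).2 a (hAL a ha) (hnd.not_mem_erase)
        have h1 : v a = w' a := h1
        exact hac (w'.injective (by rw [← h1, hwc]))
      · intro c' hc' hne
        split_ifs with h1 h2
        · rfl
        · refine opP_supp (bcl_agree L A hAL w') (hagF A) _ ?_
          intro h
          have h1 := (h (Finset.insert_subset hc' hB)).1 c' (by simp)
          have h1 : v a = w' c' := by simpa using h1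
          exact hne (w'.injective (by rw [← h1, hwc]))
        · rfl
      · exact fun h => absurd hc h
  · refine opP_supp (P := fun s => Reach L A w' m s.1 s.2) ?_ ?_ _ hR
    · intro v B a c ha hc hcB hl h
      exact Reach.step v B a c ha hc hcB hl h
    · intro s hs
      unfold dlt
      rw [if_neg]
      rintro ⟨h, h2⟩
      apply hs
      simp only [h]
      exact Reach.base _ h2

theorem opP_finF {L : Finset (Fin N)} {A : List (Fin N)} (hL : ∀ a ∈ A, ∀ c ∈ L, a < c)
    (hnd : A.Nodup) (S : Equiv.Perm (Fin N) → K) (m : ℕ) (v : Equiv.Perm (Fin N)) :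
    opP K L A (finF S m) (v, ∅) =
      ∑ w' ∈ Finset.univ.filter (fun w' => Reach L A w' m v ∅), S w' := by
  have e : finF S m = ∑ w', S w' • dlt K w' m := by
    funext s
    simp only [finF, Finset.sum_apply, Pi.smul_apply, dlt, smul_eq_mul, mul_ite, mul_one, mul_zero]
    by_cases h : s.2.card = m <;> simp [h]
  rw [e, map_sum, Finset.sum_apply, Finset.sum_filter]
  refine Finset.sum_congr rfl fun w' _ => ?_
  rw [map_smul, Pi.smul_apply, opP_dlt hL hnd w' m v ∅ (by simp), smul_eq_mul]
  split_ifs <;> simp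

theorem pos_succ [NeZero N] (x : Fin N) : pos N ((x : ℕ) + 1) = x := by
  apply Fin.ext; simp [pos, Nat.mod_eq_of_lt x.2]

theorem pos_val [NeZero N] {b : ℕ} (h1 : 1 ≤ b) (h2 : b ≤ N) : (pos N b : ℕ) = b - 1 := by
  simp only [pos]; rw [Nat.mod_eq_of_lt]; omega

theorem tProd_succ [NeZero N] (a b : ℕ → ℕ) (i : ℕ) : tProd N a b (i + 1) =
    t N (a 0) (b 0) * tProd N (fun j => a (j + 1)) (fun j => b (j + 1)) i := by
  simp [tProd, List.range_succ_eq_map, List.map_map, Function.comp_def]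

theorem Reach.to_rel [NeZero N] {k : ℕ} {L : Finset (Fin N)} {A : List (Fin N)}
    (hL : ∀ c ∈ L, k ≤ (c : ℕ)) (hA : ∀ a ∈ A, (a : ℕ) < k) {w' : Equiv.Perm (Fin N)} {m : ℕ}
    {v : Equiv.Perm (Fin N)} {B : Finset (Fin N)} (h : Reach L A w' m v B) :
    ∃ j a b, B.card + j = m ∧ StepOK N k j v a b ∧ w' = v * tProd N a b j ∧
      (∀ i i', i < j → i' < j → i ≠ i' → b i ≠ b i') ∧ ∀ i, i < j → pos N (b i) ∉ B := by
  induction h with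
  | base B hm =>
    refine ⟨0, fun _ => 0, fun _ => 0, by simpa using hm, ⟨by simp, ?_⟩, by simp [tProd],
      by simp, by simp⟩
    intro i hi
    obtain rfl : i = 0 := by omega
    simp [tProd]
  | step v B x c ha hc hcB hl hR ih =>
    obtain ⟨j, a, b, h1, ⟨h2, h3⟩, h4, h5, h6⟩ := ih
    have ht : t N ((x : ℕ) + 1) ((c : ℕ) + 1) = swap x c := by simp [t, pos_succ]
    rw [Finset.card_insert_of_notMem hcB] at h1
    have hcb : ∀ i, i < j → (c : ℕ) + 1 ≠ b i := by
      intro i hi h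
      apply h6 i hi
      rw [← h, pos_succ]; simp
    refine ⟨j + 1, fun i => Nat.casesOn i ((x : ℕ) + 1) a, fun i => Nat.casesOn i ((c : ℕ) + 1) b,
      by omega, ⟨?_, ?_⟩, ?_, ?_, ?_⟩
    · rintro (_ | i) hi
      · have := hL c hc
        have := hA x ha
        have := c.2
        change 1 ≤ (x : ℕ) + 1 ∧ (x : ℕ) + 1 ≤ k ∧ k < (c : ℕ) + 1 ∧ (c : ℕ) + 1 ≤ N
        omega
      · exact h2 i (by omega)
    · rintro (_ | i) hi
      · simp [tProd]
      · rw [tProd_succ]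
        change len (v * (t N ((x : ℕ) + 1) ((c : ℕ) + 1) * tProd N a b i)) = _
        rw [ht, ← mul_assoc, h3 i (by omega), hl]; omega
    · rw [tProd_succ]
      change w' = v * (t N ((x : ℕ) + 1) ((c : ℕ) + 1) * tProd N a b j)
      rw [ht, ← mul_assoc, ← h4]
    · rintro (_ | i) (_ | i') hi hi' hne
      · exact absurd rfl hne
      · exact hcb i' (by omega)
      · exact (hcb i (by omega)).symm
      · exact h5 i i' (by omega) (by omega) (by omega)
    · rintro (_ | i) hi
      · simpa [pos_succ] using hcB
      · have := h6 i (by omega)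
        simp only [Finset.mem_insert, not_or] at this
        exact this.2

theorem Reach.of_rel [NeZero N] {k m : ℕ} {L : Finset (Fin N)} {A : List (Fin N)}
    (hL : ∀ c : Fin N, k ≤ (c : ℕ) → c ∈ L) (hA : ∀ a : Fin N, (a : ℕ) < k → a ∈ A) (j : ℕ) :
    ∀ (v : Equiv.Perm (Fin N)) (B : Finset (Fin N)) (a b : ℕ → ℕ), B.card + j = m →
      StepOK N k j v a b → (∀ i i', i < j → i' < j → i ≠ i' → b i ≠ b i') →
      (∀ i, i < j → pos N (b i) ∉ B) → Reach L A (v * tProd N a b j) m v B := by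
  induction j with
  | zero =>
    intro v B a b h1 h2 h3 h4
    simp only [tProd, List.range_zero, List.map_nil, List.prod_nil, mul_one]
    exact Reach.base B (by omega)
  | succ j ih =>
    intro v B a b h1 ⟨h2, h2'⟩ h3 h4
    have h0 := h2 0 (by omega)
    have hl : len (v * swap (pos N (a 0)) (pos N (b 0))) = len v + 1 := by
      have := h2' 1 (by omega)
      simpa [tProd, t] using this
    refine Reach.step v B (pos N (a 0)) (pos N (b 0)) (hA _ ?_) (hL _ ?_) (h4 0 (by omega)) hl ?_
    · rw [pos_val] <;> omega
    · rw [pos_val] <;> omega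
    · rw [tProd_succ, ← mul_assoc]
      refine ih _ _ _ _ ?_ ⟨fun i hi => h2 (i + 1) (by omega), ?_⟩ ?_ ?_
      · rw [Finset.card_insert_of_notMem (h4 0 (by omega))]; omega
      · intro i hi
        have := h2' (i + 1) (by omega)
        rw [tProd_succ, ← mul_assoc] at this
        rw [← t] at hl
        rw [hl, this]; omega
      · intro i i' hi hi' hne
        exact h3 _ _ (by omega) (by omega) (by omega)
      · intro i hi
        simp only [Finset.mem_insert, not_or]
        refine ⟨?_, h4 _ (by omega)⟩
        intro h
        have q := h2 (i + 1) (by omega)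
        have h := congrArg (fun z : Fin N => (z : ℕ)) h
        rw [pos_val (by omega) (by omega), pos_val (by omega) (by omega)] at h
        exact h3 (i + 1) 0 (by omega) (by omega) (by omega) (by omega)

theorem reach_iff [NeZero N] {k m : ℕ} {L : Finset (Fin N)} {A : List (Fin N)}
    (hL : ∀ c : Fin N, c ∈ L ↔ k ≤ (c : ℕ)) (hA : ∀ a : Fin N, a ∈ A ↔ (a : ℕ) < k)
    (w w' : Equiv.Perm (Fin N)) : Reach L A w' m w ∅ ↔ RelR N k m w w' := by
  constructor
  · intro h
    obtain ⟨j, a, b, h1, h2, h3, h4, h5⟩ := h.to_rel (fun c => (hL c).1) (fun c => (hA c).1)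
    obtain rfl : j = m := by simpa using h1
    exact ⟨a, b, h2, h3, h4⟩
  · rintro ⟨a, b, h2, rfl, h4⟩
    exact Reach.of_rel (fun c => (hL c).2) (fun c => (hA c).2) m w ∅ a b (by simp) h2 h4 (by simp)

end

section
variable {K : Type} [CommRing K] {N : ℕ}

theorem hPoly_zero_right (k : ℕ) : hPoly N k 0 = 1 := by
  simp [hPoly]
  rfl

theorem hPoly_zero_left (m : ℕ) : hPoly N 0 (m + 1) = 0 := by
  simp [hPoly]

theorem hPoly_rec (k m : ℕ) (hk : k < N) : hPoly N (k + 1) (m + 1) =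
    hPoly N k (m + 1) + X ⟨k, hk⟩ * hPoly N (k + 1) m := by
  unfold hPoly
  rw [← Finset.sum_filter_not_add_sum_filter _ (fun s => (⟨k, hk⟩ : Fin N) ∈ s)]
  congr 1
  · refine Finset.sum_congr ?_ fun _ _ => rfl
    ext s
    simp only [Finset.mem_filter, Finset.mem_sym_iff, Finset.mem_univ, true_and]
    constructor
    · rintro ⟨h1, h2⟩ a ha
      have := h1 a ha
      have : (a : ℕ) ≠ k := by rintro rfl; exact h2 ha
      omega
    · intro h
      refine ⟨fun a ha => by have := h a ha; omega, fun h' => ?_⟩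
      have := h _ h'
      simp at this
  · rw [Finset.mul_sum]
    symm
    refine Finset.sum_bij (fun s _ => (⟨k, hk⟩ : Fin N) ::ₛ s) ?_ ?_ ?_ ?_
    · intro s hs
      simp only [Finset.mem_filter, Finset.mem_sym_iff, Finset.mem_univ, true_and, Sym.mem_cons] at hs ⊢
      refine ⟨?_, by simp⟩
      rintro a (rfl | ha)
      · simp
      · exact hs a ha
    · intro s _ s' _ h
      exact Sym.cons_inj_right _ _ _ |>.1 h
    · intro s hs
      simp only [Finset.mem_filter, Finset.mem_sym_iff, Finset.mem_univ, true_and] at hs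
      obtain ⟨s', rfl⟩ := (⟨_, (Sym.cons_erase hs.2).symm⟩ : ∃ s', s = (⟨k, hk⟩ : Fin N) ::ₛ s')
      refine ⟨s', ?_, rfl⟩
      simp only [Finset.mem_filter, Finset.mem_sym_iff, Finset.mem_univ, true_and]
      intro a ha
      exact hs.1 a (Sym.mem_cons_of_mem ha)
    · intro s _
      simp [Sym.coe_cons]

end

section
variable {K : Type} [CommRing K] {N : ℕ}

/-- Generic divided difference. -/
noncomputable def dd (p q : Fin N) (f : MvPolynomial (Fin N) ℤ) : MvPolynomial (Fin N) ℤ :=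
  if h : (X p - X q) ∣ (f - rename (⇑(swap p q)) f) then h.choose else 0

theorem divDiff_eq [NeZero N] (i : ℕ) (f : MvPolynomial (Fin N) ℤ) :
    divDiff i f = dd (pos N i) (pos N (i + 1)) f := rfl

theorem dd_dvd (p q : Fin N) (f : MvPolynomial (Fin N) ℤ) :
    (X p - X q) ∣ (f - rename (⇑(swap p q)) f) := by
  induction f using MvPolynomial.induction_on with
  | C a => simp
  | add f g hf hg =>
    have : f + g - rename (⇑(swap p q)) (f + g) =
      (f - rename (⇑(swap p q)) f) + (g - rename (⇑(swap p q)) g) := by rw [map_add]; ring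
    rw [this]; exact dvd_add hf hg
  | mul_X f i hf =>
    have : f * X i - rename (⇑(swap p q)) (f * X i) =
      (f - rename (⇑(swap p q)) f) * X i + rename (⇑(swap p q)) f * (X i - X (swap p q i)) := by
      rw [map_mul, rename_X]; ring
    rw [this]
    refine dvd_add (hf.mul_right _) (Dvd.dvd.mul_left ?_ _)
    by_cases h1 : i = p
    · subst h1; simp
    · by_cases h2 : i = q
      · subst h2; simp only [swap_apply_right]; exact ⟨-1, by ring⟩
      · rw [swap_apply_of_ne_of_ne h1 h2]; simp

theorem dd_spec (p q : Fin N) (f : MvPolynomial (Fin N) ℤ) :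
    (X p - X q) * dd p q f = f - rename (⇑(swap p q)) f := by
  unfold dd
  rw [dif_pos (dd_dvd p q f)]
  exact (dd_dvd p q f).choose_spec.symm

theorem X_sub_ne {p q : Fin N} (h : p ≠ q) : (X p - X q : MvPolynomial (Fin N) ℤ) ≠ 0 := by
  rw [sub_ne_zero]
  exact fun e => h (X_injective e)

theorem dd_uniq {p q : Fin N} (h : p ≠ q) {f g : MvPolynomial (Fin N) ℤ}
    (hg : (X p - X q) * g = f - rename (⇑(swap p q)) f) : dd p q f = g :=
  mul_left_cancel₀ (X_sub_ne h) (by rw [dd_spec, hg])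

theorem dd_add {p q : Fin N} (h : p ≠ q) (f g : MvPolynomial (Fin N) ℤ) :
    dd p q (f + g) = dd p q f + dd p q g :=
  dd_uniq h (by rw [mul_add, dd_spec, dd_spec, map_add]; ring)

theorem dd_neg {p q : Fin N} (h : p ≠ q) (f : MvPolynomial (Fin N) ℤ) :
    dd p q (-f) = -dd p q f :=
  dd_uniq h (by rw [mul_neg, dd_spec, map_neg]; ring)

theorem dd_sub {p q : Fin N} (h : p ≠ q) (f g : MvPolynomial (Fin N) ℤ) :
    dd p q (f - g) = dd p q f - dd p q g :=
  dd_uniq h (by rw [mul_sub, dd_spec, dd_spec, map_sub]; ring)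

theorem dd_zero {p q : Fin N} (h : p ≠ q) : dd p q 0 = 0 :=
  dd_uniq h (by simp)

theorem dd_sum {p q : Fin N} (h : p ≠ q) {ι : Type} (s : Finset ι)
    (f : ι → MvPolynomial (Fin N) ℤ) : dd p q (∑ i ∈ s, f i) = ∑ i ∈ s, dd p q (f i) :=
  dd_uniq h (by
    rw [Finset.mul_sum, map_sum, ← Finset.sum_sub_distrib]
    exact Finset.sum_congr rfl fun i _ => dd_spec p q (f i))

theorem dd_mul {p q : Fin N} (h : p ≠ q) (f g : MvPolynomial (Fin N) ℤ) :
    dd p q (f * g) = dd p q f * g + rename (⇑(swap p q)) f * dd p q g :=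
  dd_uniq h (by
    rw [map_mul]
    linear_combination g * dd_spec p q f + rename (⇑(swap p q)) f * dd_spec p q g)

theorem dd_of_inv {p q : Fin N} (h : p ≠ q) {f : MvPolynomial (Fin N) ℤ}
    (hf : rename (⇑(swap p q)) f = f) : dd p q f = 0 :=
  dd_uniq h (by rw [hf]; ring)

theorem swap_swap_rename (p q : Fin N) (f : MvPolynomial (Fin N) ℤ) :
    rename (⇑(swap p q)) (rename (⇑(swap p q)) f) = f := by
  rw [rename_rename]
  have : (⇑(swap p q) ∘ ⇑(swap p q)) = id := by ext x; simp
  rw [this, rename_id_apply]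

theorem dd_inv {p q : Fin N} (h : p ≠ q) (f : MvPolynomial (Fin N) ℤ) :
    rename (⇑(swap p q)) (dd p q f) = dd p q f := by
  symm
  apply dd_uniq h
  have := congrArg (rename (⇑(swap p q))) (dd_spec p q f)
  rw [map_mul, map_sub, map_sub, swap_swap_rename, rename_X, rename_X, swap_apply_left,
    swap_apply_right] at this
  linear_combination -this

theorem dd_dd {p q : Fin N} (h : p ≠ q) (f : MvPolynomial (Fin N) ℤ) : dd p q (dd p q f) = 0 :=
  dd_of_inv h (dd_inv h f)

theorem dd_comm_sym {p q : Fin N} (h : p ≠ q) (f : MvPolynomial (Fin N) ℤ) :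
    dd q p f = -dd p q f :=
  dd_uniq h.symm (by rw [swap_comm]; linear_combination dd_spec p q f)

theorem dd_comm {p q r s : Fin N} (hpq : p ≠ q) (hrs : r ≠ s) (h1 : p ≠ r) (h2 : p ≠ s)
    (h3 : q ≠ r) (h4 : q ≠ s) (f : MvPolynomial (Fin N) ℤ) :
    dd p q (dd r s f) = dd r s (dd p q f) := by
  have key : ∀ {p q r s : Fin N}, p ≠ q → r ≠ s → p ≠ r → p ≠ s → q ≠ r → q ≠ s →
      (X p - X q) * (X r - X s) * dd p q (dd r s f) = f - rename (⇑(swap p q)) f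
        - rename (⇑(swap r s)) f + rename (⇑(swap p q)) (rename (⇑(swap r s)) f) := by
    intro p q r s hpq hrs h1 h2 h3 h4
    have e1 := dd_spec p q (dd r s f)
    have e2 := dd_spec r s f
    have e3 := congrArg (rename (⇑(swap p q))) e2
    rw [map_mul, map_sub, map_sub, rename_X, rename_X, swap_apply_of_ne_of_ne h1.symm h3.symm,
      swap_apply_of_ne_of_ne h2.symm h4.symm] at e3
    linear_combination (X r - X s) * e1 + e2 - e3
  have k1 := key hpq hrs h1 h2 h3 h4
  have k2 := key hrs hpq h1.symm h3.symm h2.symm h4.symm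
  have e : rename (⇑(swap p q)) (rename (⇑(swap r s)) f) =
      rename (⇑(swap r s)) (rename (⇑(swap p q)) f) := by
    rw [rename_rename, rename_rename]
    congr 2
    ext x
    simp only [Function.comp]
    have : swap p q * swap r s = swap r s * swap p q :=
      (Equiv.Perm.Disjoint.commute (Equiv.Perm.disjoint_iff_disjoint_support.2 (by
        rw [Equiv.Perm.support_swap hpq, Equiv.Perm.support_swap hrs]
        simp [*]; grind))).eq
    exact congrArg Fin.val (congrArg (fun g : Perm (Fin N) => g x) this)
  refine mul_left_cancel₀ (mul_ne_zero (X_sub_ne hpq) (X_sub_ne hrs)) ?_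
  rw [k1]
  linear_combination -k2 + e

theorem dd_braid_aux {p q r : Fin N} (hpq : p ≠ q) (hqr : q ≠ r) (hpr : p ≠ r)
    (f : MvPolynomial (Fin N) ℤ) :
    (X p - X q) * (X q - X r) * (X p - X r) * dd p q (dd q r (dd p q f)) =
      f - rename (⇑(swap p q)) f - rename (⇑(swap q r)) f
        + rename (⇑(swap q r)) (rename (⇑(swap p q)) f)
        + rename (⇑(swap p q)) (rename (⇑(swap q r)) f)
        - rename (⇑(swap p q)) (rename (⇑(swap q r)) (rename (⇑(swap p q)) f)) := by
  set g := dd p q f with hg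
  set h := dd q r g with hh
  have e1 : (X p - X q) * g = f - rename (⇑(swap p q)) f := dd_spec p q f
  have e2 := congrArg (rename (⇑(swap q r))) e1
  rw [map_mul, map_sub, map_sub, rename_X, rename_X, swap_apply_of_ne_of_ne hpq hpr,
    swap_apply_left] at e2
  have e3 := congrArg (rename (⇑(swap p q))) e2
  rw [map_mul, map_sub, map_sub, rename_X, rename_X, swap_apply_left,
    swap_apply_of_ne_of_ne hpr.symm hqr.symm] at e3
  have e4 : (X q - X r) * h = g - rename (⇑(swap q r)) g := dd_spec q r g
  have e5 := congrArg (rename (⇑(swap p q))) e4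
  rw [map_mul, map_sub, map_sub, rename_X, rename_X, swap_apply_right,
    swap_apply_of_ne_of_ne hpr.symm hqr.symm, dd_inv hpq] at e5
  have e6 := dd_spec p q h
  refine mul_left_cancel₀ (X_sub_ne hpq) ?_
  linear_combination (X p - X q) * (X q - X r) * (X p - X r) * e6 +
    (X p - X q) * (X p - X r) * e4 - (X p - X q) * (X q - X r) * e5 +
    (X p - X q) * e1 - (X p - X q) * e2 + (X p - X q) * e3

theorem dd_braid {p q r : Fin N} (hpq : p ≠ q) (hqr : q ≠ r) (hpr : p ≠ r)
    (f : MvPolynomial (Fin N) ℤ) :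
    dd p q (dd q r (dd p q f)) = dd q r (dd p q (dd q r f)) := by
  have k1 := dd_braid_aux hpq hqr hpr f
  have k2 := dd_braid_aux hqr.symm hpq.symm hpr.symm f
  have e : rename (⇑(swap p q)) (rename (⇑(swap q r)) (rename (⇑(swap p q)) f)) =
      rename (⇑(swap q r)) (rename (⇑(swap p q)) (rename (⇑(swap q r)) f)) := by
    simp only [rename_rename]
    congr 2
    ext x
    simp only [Function.comp, swap_apply_def]
    grind
  rw [dd_comm_sym hqr, dd_comm_sym hpq, dd_comm_sym hqr, dd_neg hpq, dd_neg hqr, dd_neg hqr,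
    neg_neg, swap_comm r q, swap_comm q p] at k2
  refine mul_left_cancel₀ (mul_ne_zero (mul_ne_zero (X_sub_ne hpq) (X_sub_ne hqr))
    (X_sub_ne hpr)) ?_
  linear_combination k1 - k2 - e

theorem dd_mem {p q : Fin N} (h : p ≠ q) {f : MvPolynomial (Fin N) ℤ} (hf : f ∈ symIdeal N) :
    dd p q f ∈ symIdeal N := by
  unfold symIdeal at hf
  induction hf using Submodule.span_induction with
  | mem x hx => rw [dd_of_inv h (hx.1 _)]; exact Ideal.zero_mem _
  | zero => rw [dd_zero h]; exact Ideal.zero_mem _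
  | add x y _ _ hx hy => rw [dd_add h]; exact Ideal.add_mem _ hx hy
  | smul a x hx' hx =>
    rw [smul_eq_mul, dd_mul h]
    exact Ideal.add_mem _ (Ideal.mul_mem_left _ _ hx') (Ideal.mul_mem_left _ _ hx)

theorem dd_X {p q : Fin N} (h : p ≠ q) (k : Fin N) :
    dd p q (X k) = if k = p then 1 else if k = q then -1 else 0 := by
  apply dd_uniq h
  rw [rename_X]
  split_ifs with h1 h2
  · subst h1; simp
  · subst h2; simp
  · rw [swap_apply_of_ne_of_ne h1 h2]; simp

end

section
variable {K : Type} [CommRing K] {N : ℕ}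

theorem t_adj [NeZero N] {p q : Fin N} (h : (p : ℕ) + 1 = q) :
    t N ((p : ℕ) + 1) ((p : ℕ) + 1 + 1) = swap p q := by
  unfold t
  rw [pos_succ]
  congr 1
  rw [h, pos_succ]

theorem divDiff_adj [NeZero N] {p q : Fin N} (h : (p : ℕ) + 1 = q)
    (f : MvPolynomial (Fin N) ℤ) : divDiff ((p : ℕ) + 1) f = dd p q f := by
  rw [divDiff_eq, pos_succ, h, pos_succ]

theorem val_lt_iff [NeZero N] (w : Perm (Fin N)) {p q : Fin N} (h : (p : ℕ) + 1 = q) :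
    val w ((p : ℕ) + 1 + 1) < val w ((p : ℕ) + 1) ↔ w q < w p := by
  unfold val
  rw [h, pos_succ, ← h, pos_succ]
  exact Nat.add_lt_add_iff_right

theorem find_cases [NeZero N] (w : Perm (Fin N)) :
    ((∀ p q : Fin N, (p : ℕ) + 1 = q → w p < w q) ∧ ∀ fuel, redWordAux N fuel w = []) ∨
    ∃ p q : Fin N, (p : ℕ) + 1 = q ∧ w q < w p ∧ ∀ fuel, redWordAux N (fuel + 1) w =
      redWordAux N fuel (w * swap p q) ++ [(p : ℕ) + 1] := by
  cases hf : ((List.range (N - 1)).map (· + 1)).find?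
      (fun i => decide (val w (i + 1) < val w i)) with
  | none =>
    left
    constructor
    · intro p q h
      rw [List.find?_eq_none] at hf
      have := hf ((p : ℕ) + 1) (by simp; omega)
      simp only [decide_eq_true_eq] at this
      rw [val_lt_iff w h] at this
      have hne : w p ≠ w q := fun e => by have := w.injective e; subst this; omega
      exact lt_of_le_of_ne (not_lt.1 this) hne
    · intro fuel
      cases fuel with
      | zero => rfl
      | succ fuel => rw [redWordAux, hf]
  | some i =>
    right
    have h1 := List.mem_of_find?_eq_some hf
    have h2 := List.find?_some hf
    simp only [List.mem_map, List.mem_range] at h1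
    obtain ⟨j, hj, rfl⟩ := h1
    have e : (((⟨j, by omega⟩ : Fin N) : ℕ)) + 1 = ((⟨j + 1, by omega⟩ : Fin N) : ℕ) := rfl
    refine ⟨⟨j, by omega⟩, ⟨j + 1, by omega⟩, rfl, ?_, ?_⟩
    · rw [← val_lt_iff w e]
      simpa using h2
    · intro fuel
      rw [redWordAux, hf, ← t_adj e]

theorem redWordAux_fuel [NeZero N] (l : ℕ) : ∀ (w : Perm (Fin N)) (f g : ℕ), len w = l →
    l ≤ f → l ≤ g → redWordAux N f w = redWordAux N g w := by
  induction l with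
  | zero =>
    intro w f g hl hf hg
    rcases find_cases w with ⟨_, h⟩ | ⟨p, q, hpq, hlt, h⟩
    · rw [h, h]
    · have := len_adj' w hpq hlt
      omega
  | succ l ih =>
    intro w f g hl hf hg
    rcases find_cases w with ⟨_, h⟩ | ⟨p, q, hpq, hlt, h⟩
    · rw [h, h]
    · have := len_adj' w hpq hlt
      obtain ⟨f, rfl⟩ : ∃ f', f = f' + 1 := ⟨f - 1, by omega⟩
      obtain ⟨g, rfl⟩ : ∃ f', g = f' + 1 := ⟨g - 1, by omega⟩
      rw [h, h, ih (w * swap p q) f g (by omega) (by omega) (by omega)]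

/-- The operator attached to a permutation. -/
noncomputable def pd [NeZero N] (w : Perm (Fin N)) (f : MvPolynomial (Fin N) ℤ) :
    MvPolynomial (Fin N) ℤ := divDiffWord (redWord N w) f

theorem pd_cases [NeZero N] (w : Perm (Fin N)) :
    ((∀ p q : Fin N, (p : ℕ) + 1 = q → w p < w q) ∧ ∀ f, pd w f = f) ∨
    ∃ p q : Fin N, (p : ℕ) + 1 = q ∧ w q < w p ∧ ∀ f, pd w f = pd (w * swap p q) (dd p q f) := by
  rcases find_cases w with ⟨h1, h⟩ | ⟨p, q, hpq, hlt, h⟩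
  · left
    refine ⟨h1, fun f => ?_⟩
    simp [pd, redWord, h, divDiffWord]
  · right
    refine ⟨p, q, hpq, hlt, fun f => ?_⟩
    have h1 := len_adj' w hpq hlt
    have h2 := len_le w
    have e : redWord N w = redWord N (w * swap p q) ++ [(p : ℕ) + 1] := by
      unfold redWord
      obtain ⟨g, hg⟩ : ∃ g, N * N = g + 1 := ⟨N * N - 1, by omega⟩
      rw [hg, h g, redWordAux_fuel _ (w * swap p q) g (g + 1) rfl (by omega) (by omega)]
    unfold pd
    rw [e]
    simp only [divDiffWord, List.foldr_append, List.foldr_cons, List.foldr_nil]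
    rw [divDiff_adj hpq]

theorem adj_ne {p q : Fin N} (h : (p : ℕ) + 1 = q) : p ≠ q := by
  rintro rfl; omega

theorem pd_desc [NeZero N] (l : ℕ) : ∀ (w : Perm (Fin N)) (p q : Fin N), len w = l →
    (p : ℕ) + 1 = q → w q < w p → ∀ f, pd w f = pd (w * swap p q) (dd p q f) := by
  induction l using Nat.strong_induction_on with
  | _ l ih =>
  have braid : ∀ (w : Perm (Fin N)) (p q r : Fin N), len w = l → (p : ℕ) + 1 = q → (q : ℕ) + 1 = r →
      w q < w p → w r < w q → ∀ f, pd (w * swap p q) (dd p q f) = pd (w * swap q r) (dd q r f) := by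
    intro w p q r hl hpq hqr h1 h2 f
    have hpq' := adj_ne hpq
    have hqr' := adj_ne hqr
    have hpr' : p ≠ r := by rintro rfl; omega
    have l1 := len_adj' w hpq h1
    have l2 := len_adj' w hqr h2
    have d1 : (w * swap p q) r < (w * swap p q) q := by
      simp [swap_apply_of_ne_of_ne hpr'.symm hqr'.symm]; exact h2.trans h1
    have d2 : (w * swap q r) q < (w * swap q r) p := by
      simp [swap_apply_of_ne_of_ne hpq' hpr']; exact h2.trans h1
    have l3 := len_adj' _ hqr d1
    have l4 := len_adj' _ hpq d2
    rw [ih _ (by omega) (w * swap p q) q r rfl hqr d1, ih _ (by omega) (w * swap q r) p q rfl hpq d2]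
    rw [ih _ (by omega) (w * swap p q * swap q r) p q rfl hpq ?_,
      ih _ (by omega) (w * swap q r * swap p q) q r rfl hqr ?_, dd_braid hpq' hqr' hpr']
    · congr 1
      simp only [mul_assoc]
      congr 1
      ext x
      simp only [Perm.mul_apply, swap_apply_def]
      grind
    · simp only [Perm.mul_apply, swap_apply_def]
      grind
    · simp only [Perm.mul_apply, swap_apply_def]
      grind
  intro w p q hl hpq hlt f
  rcases pd_cases w with ⟨h1, h⟩ | ⟨p', q', hpq', hlt', h⟩
  · exact absurd (h1 p q hpq) (not_lt.2 hlt.le)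
  · rw [h]
    by_cases c1 : p = p'
    · subst c1
      have : q = q' := Fin.ext (by omega)
      subst this; rfl
    · have hp : (p : ℕ) ≠ p' := fun e => c1 (Fin.ext e)
      by_cases c2 : (q' : ℕ) = p
      · obtain rfl : q' = p := Fin.ext c2
        exact braid w p' q' q hl hpq' hpq hlt' hlt f
      · by_cases c3 : (q : ℕ) = p'
        · obtain rfl : q = p' := Fin.ext c3
          exact (braid w p q q' hl hpq hpq' hlt hlt' f).symm
        · have n1 : p ≠ q' := fun e => c2 (by rw [e])
          have n2 : q ≠ p' := fun e => c3 (by rw [e])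
          have n3 : q ≠ q' := fun e => hp (by have := congrArg Fin.val e; omega)
          have n4 := adj_ne hpq
          have n5 := adj_ne hpq'
          have l1 := len_adj' w hpq hlt
          have l2 := len_adj' w hpq' hlt'
          rw [ih _ (by omega) (w * swap p' q') p q rfl hpq ?_,
            ih _ (by omega) (w * swap p q) p' q' rfl hpq' ?_, dd_comm n4 n5 c1 n1 n2 n3]
          · congr 1
            simp only [mul_assoc]
            congr 1
            ext x
            simp only [Perm.mul_apply, swap_apply_def]
            grind
          · simp only [Perm.mul_apply, swap_apply_def]
            grind
          · simp only [Perm.mul_apply, swap_apply_def]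
            grind

theorem strictMono_of_adj {g : Fin N → Fin N} (h : ∀ p q : Fin N, (p : ℕ) + 1 = q → g p < g q) :
    StrictMono g := by
  cases N with
  | zero => intro a; exact a.elim0
  | succ N =>
    rw [Fin.strictMono_iff_lt_succ]
    intro i
    exact h _ _ (by simp)

theorem perm_eq_one {w : Perm (Fin N)} (h : ∀ p q : Fin N, (p : ℕ) + 1 = q → w p < w q) : w = 1 := by
  have h1 := strictMono_of_adj h
  have h2 : StrictMono (id : Fin N → Fin N) := strictMono_id
  have := (StrictMono.range_inj h1 h2).1 (by rw [w.surjective.range_eq, Set.range_id])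
  ext x
  rw [this]; rfl

theorem pd_one [NeZero N] (f : MvPolynomial (Fin N) ℤ) : pd (1 : Perm (Fin N)) f = f := by
  rcases pd_cases (1 : Perm (Fin N)) with ⟨_, h⟩ | ⟨p, q, hpq, hlt, _⟩
  · exact h f
  · rw [Fin.lt_def] at hlt; simp only [Perm.one_apply] at hlt; omega

theorem pd_left [NeZero N] (l : ℕ) : ∀ (u : Perm (Fin N)) (x y : Fin N), len u = l →
    (x : ℕ) + 1 = y → u⁻¹ x < u⁻¹ y → ∀ f, pd (swap x y * u) f = dd x y (pd u f) := by
  induction l using Nat.strong_induction_on with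
  | _ l ih =>
  intro u x y hl hxy hu f
  rcases pd_cases u with ⟨h1, h⟩ | ⟨p, q, hpq, hlt, h⟩
  · have := perm_eq_one h1
    subst this
    rw [pd_one, mul_one, pd_desc _ (swap x y) x y rfl hxy (by
      rw [swap_apply_left, swap_apply_right, Fin.lt_def]; omega),
      swap_mul_self, pd_one]
  · have l1 := len_adj' u hpq hlt
    obtain ⟨i, rfl⟩ := u.surjective x
    obtain ⟨j, rfl⟩ := u.surjective y
    simp only [Perm.inv_def, symm_apply_apply] at hu
    have hpq' := adj_ne hpq
    have hij : i ≠ j := hu.ne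
    rw [pd_desc _ (swap (u i) (u j) * u) p q rfl hpq ?_, mul_assoc,
      ih _ (by omega) (u * swap p q) _ _ rfl hxy ?_, h]
    · have e : (u * swap p q)⁻¹ = swap p q * u⁻¹ := by simp
      rw [e]
      simp only [Perm.mul_apply, Perm.inv_def, symm_apply_apply, swap_apply_def]
      have : ¬ (i = p ∧ j = q) := by
        rintro ⟨rfl, rfl⟩
        rw [Fin.lt_def] at hlt; omega
      simp only [Fin.lt_def, Fin.ext_iff] at *
      split_ifs <;> omega
    · simp only [Perm.mul_apply, swap_apply_def, EmbeddingLike.apply_eq_iff_eq]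
      have : ¬ (i = q ∧ j = p) := by
        rintro ⟨rfl, rfl⟩
        simp only [Fin.lt_def] at hu; omega
      have inj : ∀ a b : Fin N, (u a : ℕ) = u b ↔ (a : ℕ) = b := fun a b =>
        ⟨fun h => by rw [u.injective (Fin.ext h)], fun h => by rw [Fin.ext h]⟩
      have i1 := inj p i
      have i2 := inj p j
      have i3 := inj q i
      have i4 := inj q j
      simp only [Fin.lt_def, Fin.ext_iff] at *
      split_ifs <;> omega

theorem schubert_desc [NeZero N] (w : Perm (Fin N)) {p q : Fin N} (hpq : (p : ℕ) + 1 = q)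
    (h : w q < w p) : dd p q (schubertPoly N w) = schubertPoly N (w * swap p q) := by
  have := pd_left _ (w⁻¹ * w0 N) p q rfl hpq (by
    have : (w⁻¹ * w0 N)⁻¹ = w0 N * w := by
      rw [mul_inv_rev, inv_inv]; rfl
    rw [this]
    simp only [Perm.mul_apply]
    exact Fin.rev_lt_rev.2 h) (staircase N)
  rw [← mul_assoc] at this
  have e : (w * swap p q)⁻¹ = swap p q * w⁻¹ := by simp
  rw [schubertPoly, schubertPoly, e]
  exact this.symm

theorem schubert_asc [NeZero N] (w : Perm (Fin N)) {p q : Fin N} (hpq : (p : ℕ) + 1 = q)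
    (h : w p < w q) : dd p q (schubertPoly N w) = 0 := by
  have := schubert_desc (w * swap p q) hpq (by simpa using h)
  rw [mul_assoc, swap_mul_self, mul_one] at this
  rw [← this, dd_dd (adj_ne hpq)]

theorem schubert_w0 [NeZero N] : schubertPoly N (w0 N) = staircase N := by
  unfold schubertPoly
  rw [inv_mul_cancel]
  exact pd_one _

end

section
variable {K : Type} [CommRing K] {N : ℕ}

theorem hPoly_const (m : ℕ) (k : ℕ) : k ≤ N → constantCoeff (hPoly N k (m + 1)) = 0 := by
  induction k with
  | zero => intro _; rw [hPoly_zero_left, map_zero]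
  | succ k ih =>
    intro hk
    rw [hPoly_rec k m hk, map_add, ih (by omega), map_mul, constantCoeff_X]; simp

theorem hPoly_full (m : ℕ) : hPoly N N m = hsymm (Fin N) ℤ m := by
  unfold hPoly hsymm
  have : (Finset.univ.filter fun i : Fin N => (i : ℕ) < N) = Finset.univ := by
    ext i; simp
  rw [this, Finset.sym_univ]
  rfl

theorem hPoly_mem (d : ℕ) : ∀ k m, k + d = N → N < k + m → hPoly N k m ∈ symIdeal N := by
  induction d with
  | zero =>
    intro k m hk hm
    obtain rfl : k = N := by omega
    obtain ⟨m, rfl⟩ : ∃ m', m = m' + 1 := ⟨m - 1, by omega⟩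
    refine Ideal.subset_span ⟨?_, hPoly_const m k le_rfl⟩
    rw [hPoly_full]
    exact hsymm_isSymmetric _ _ _
  | succ d ih =>
    intro k m hk hm
    obtain ⟨m, rfl⟩ : ∃ m', m = m' + 1 := ⟨m - 1, by omega⟩
    have h := hPoly_rec k m (show k < N by omega)
    have h := eq_sub_of_add_eq h.symm
    rw [h]
    exact Ideal.sub_mem _ (ih _ _ (by omega) (by omega))
      (Ideal.mul_mem_left _ _ (ih _ _ (by omega) (by omega)))

/-- Partial staircase. -/
noncomputable def stM (N k : ℕ) : MvPolynomial (Fin N) ℤ :=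
  ∏ i ∈ Finset.univ.filter (fun i : Fin N => (i : ℕ) < k), X i ^ (N - 1 - (i : ℕ))

theorem stM_succ (k : ℕ) (hk : k < N) :
    stM N (k + 1) = X ⟨k, hk⟩ ^ (N - 1 - k) * stM N k := by
  unfold stM
  have : (Finset.univ.filter fun i : Fin N => (i : ℕ) < k + 1) =
      insert (⟨k, hk⟩ : Fin N) (Finset.univ.filter fun i : Fin N => (i : ℕ) < k) := by
    ext i; simp [Fin.ext_iff]; omega
  rw [this, Finset.prod_insert (by simp)]

theorem stM_mem (k : ℕ) : k ≤ N → ∀ j : Fin N, (j : ℕ) < k → X j * stM N k ∈ symIdeal N := by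
  induction k with
  | zero => intro _ j hj; omega
  | succ k ih =>
    intro hk j hj
    have ih := ih (by omega)
    rw [stM_succ k (by omega)]
    by_cases hjk : (j : ℕ) < k
    · have := Ideal.mul_mem_left _ (X ⟨k, by omega⟩ ^ (N - 1 - k)) (ih j hjk)
      convert this using 1; ring
    · have hj' : j = ⟨k, by omega⟩ := Fin.ext (by simp; omega)
      rw [hj']
      have h1 : ∀ i m, i ≤ k → hPoly N i (m + 1) * stM N k ∈ symIdeal N := by
        intro i
        induction i with
        | zero => intro m _; rw [hPoly_zero_left, zero_mul]; exact Ideal.zero_mem _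
        | succ i ihi =>
          intro m hi
          rw [hPoly_rec i m (by omega), add_mul]
          refine Ideal.add_mem _ (ihi m (by omega)) ?_
          have := Ideal.mul_mem_left _ (hPoly N (i + 1) m) (ih ⟨i, by omega⟩ (by simp; omega))
          convert this using 1; ring
      have h2 : ∀ m, (hPoly N (k + 1) m - X ⟨k, by omega⟩ ^ m) * stM N k ∈ symIdeal N := by
        intro m
        induction m with
        | zero => rw [hPoly_zero_right]; simp
        | succ m ihm =>
          rw [hPoly_rec k m (by omega)]
          have := Ideal.add_mem _ (h1 k m le_rfl) (Ideal.mul_mem_left _ (X ⟨k, by omega⟩) ihm)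
          convert this using 1; ring
      have h3 := Ideal.mul_mem_right (stM N k) _
        (hPoly_mem (N - (k + 1)) (k + 1) (N - k) (by omega) (by omega))
      have h4 := Ideal.sub_mem _ h3 (h2 (N - k))
      convert h4 using 1
      obtain ⟨e, he⟩ : ∃ e, N - k = e + 1 := ⟨N - k - 1, by omega⟩
      rw [he, show N - 1 - k = e by omega]
      ring

theorem X_mul_stair (j : Fin N) : X j * staircase N ∈ symIdeal N := by
  have := stM_mem N le_rfl j j.2
  have e : stM N N = staircase N := by
    unfold stM staircase
    congr 1
    ext i; simp
  rwa [e] at this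

/-- Terms in Monk's rule. -/
noncomputable def mT [NeZero N] (w : Perm (Fin N)) (k j : Fin N) : MvPolynomial (Fin N) ℤ :=
  if len (w * swap k j) = len w + 1 then
    (if k < j then schubertPoly N (w * swap k j) else -schubertPoly N (w * swap k j)) else 0

/-- Defect of Monk's rule. -/
noncomputable def mD [NeZero N] (w : Perm (Fin N)) (k : Fin N) : MvPolynomial (Fin N) ℤ :=
  X k * schubertPoly N w - ∑ j, mT w k j

theorem len_self (w : Perm (Fin N)) (k : Fin N) : ¬ len (w * swap k k) = len w + 1 := by
  rw [swap_self]
  change ¬ len (w * 1) = len w + 1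
  rw [mul_one]; omega

theorem len_lt_iff' (w : Perm (Fin N)) (k j : Fin N) (h : k ≠ j) :
    len w < len (w * swap k j) ↔ (k < j ↔ w k < w j) := by
  rcases lt_or_gt_of_ne h with h1 | h1
  · rw [len_lt_iff w h1]; simp [h1]
  · rw [swap_comm, len_lt_iff w h1]
    have : w j ≠ w k := fun e => h (w.injective e).symm
    have : w j < w k ↔ ¬ w k < w j := by rw [not_lt, this.le_iff_lt]
    rw [this]
    simp [not_lt.2 h1.le]

theorem mT_desc [NeZero N] (w : Perm (Fin N)) {p q : Fin N} (hpq : (p : ℕ) + 1 = q)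
    (h : w q < w p) (k j : Fin N) : dd p q (mT w k j) = mT (w * swap p q) (swap p q k) (swap p q j)
      + if k = p ∧ j = q then schubertPoly N w else if k = q ∧ j = p then -schubertPoly N w else 0 := by
  have hne := adj_ne hpq
  have hlt : p < q := by rw [Fin.lt_def]; omega
  have l1 := len_adj' w hpq h
  by_cases c1 : k = p ∧ j = q
  · obtain ⟨rfl, rfl⟩ := c1
    rw [mT, if_neg (by omega), dd_zero hne, mT]
    simp only [swap_apply_left, swap_apply_right, swap_comm j k]
    simp [mul_assoc, l1, not_lt.2 hlt.le]
  by_cases c2 : k = q ∧ j = p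
  · obtain ⟨rfl, rfl⟩ := c2
    rw [mT, if_neg (by rw [swap_comm]; omega), dd_zero hne, mT]
    simp only [swap_apply_left, swap_apply_right, swap_comm k j]
    simp [mul_assoc, l1, hlt, hne.symm]
  rw [if_neg c1, if_neg c2, add_zero]
  by_cases hkj : k = j
  · subst hkj
    rw [mT, mT, if_neg (len_self _ _), if_neg (len_self _ _), dd_zero hne]
  have e : w * swap p q * swap (swap p q k) (swap p q j) = w * swap k j * swap p q := by
    have : swap (swap p q k) (swap p q j) = swap p q * swap k j * (swap p q)⁻¹ := by
      rw [Equiv.swap_apply_apply]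
    rw [this]
    simp only [swap_inv, mul_assoc]
    rw [← mul_assoc (swap p q) (swap p q), swap_mul_self, one_mul]
  have ord : (swap p q k < swap p q j) ↔ k < j := by
    simp only [swap_apply_def]
    simp only [Fin.lt_def, Fin.ext_iff] at *
    split_ifs <;> omega
  have hasc : len w < len (w * swap k j) ↔
      len (w * swap p q) < len (w * swap k j * swap p q) := by
    rw [← e, len_lt_iff' _ _ _ hkj, len_lt_iff' _ _ _ (by simpa using hkj), ord]
    simp
  have hv : (w * swap k j) p ≠ (w * swap k j) q := fun e => hne ((w * swap k j).injective e)
  rw [mT, mT, e]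
  simp only [ord]
  rcases lt_or_gt_of_ne hv with hv | hv
  · have l2 := len_adj (w * swap k j) hpq hv
    rw [if_neg (c := len (w * swap k j * swap p q) = _) (by omega)]
    split_ifs
    · exact schubert_asc _ hpq hv
    · rw [dd_neg hne, schubert_asc _ hpq hv, neg_zero]
    · exact dd_zero hne
  · have l2 := len_adj' (w * swap k j) hpq hv
    have : len (w * swap k j) = len w + 1 ↔
        len (w * swap k j * swap p q) = len (w * swap p q) + 1 := by omega
    simp only [this]
    split_ifs
    · exact schubert_desc _ hpq hv
    · rw [dd_neg hne, schubert_desc _ hpq hv]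
    · exact dd_zero hne

theorem mD_desc [NeZero N] (w : Perm (Fin N)) {p q : Fin N} (hpq : (p : ℕ) + 1 = q)
    (h : w q < w p) (k : Fin N) : dd p q (mD w k) = mD (w * swap p q) (swap p q k) := by
  have hne := adj_ne hpq
  unfold mD
  rw [dd_sub hne, dd_mul hne, dd_sum hne, schubert_desc w hpq h, rename_X, dd_X hne]
  rw [← Equiv.sum_comp (swap p q) (fun j => mT (w * swap p q) (swap p q k) j)]
  simp only [mT_desc w hpq h]
  rw [Finset.sum_add_distrib]
  have : ∑ j : Fin N, (if k = p ∧ j = q then schubertPoly N w else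
      if k = q ∧ j = p then -schubertPoly N w else 0) =
      (if k = p then 1 else if k = q then -1 else 0) * schubertPoly N w := by
    by_cases c1 : k = p
    · subst c1
      simp [hne]
    · by_cases c2 : k = q
      · simp [c1, c2, hne.symm]
      · simp [c1, c2]
  rw [this]
  ring

theorem perm_eq_w0 {w : Perm (Fin N)} (h : ∀ p q : Fin N, (p : ℕ) + 1 = q → w q < w p) :
    w = w0 N := by
  have : w0 N * w = 1 := perm_eq_one fun p q hpq => Fin.rev_lt_rev.2 (h p q hpq)
  have h2 : w0 N * w0 N = 1 := by ext x; simp [w0]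
  exact mul_left_cancel (this.trans h2.symm)

theorem mD_mem [NeZero N] (d : ℕ) : ∀ (w : Perm (Fin N)) (k : Fin N), N * N - len w = d →
    mD w k ∈ symIdeal N := by
  induction d using Nat.strong_induction_on with
  | _ d ih =>
  intro w k hd
  by_cases hw : ∀ p q : Fin N, (p : ℕ) + 1 = q → w q < w p
  · have := perm_eq_w0 hw
    subst this
    unfold mD
    rw [schubert_w0, Finset.sum_eq_zero, sub_zero]
    · exact X_mul_stair k
    · intro j _
      rw [mT, if_neg]
      intro h
      by_cases hkj : k = j
      · subst hkj; exact len_self _ _ h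
      · have := (len_lt_iff' (w0 N) k j hkj).1 (by omega)
        have e : w0 N k < w0 N j ↔ j < k := Fin.rev_lt_rev
        rw [e] at this
        rcases lt_or_gt_of_ne hkj with h1 | h1
        · exact lt_asymm h1 (this.1 h1)
        · exact lt_asymm h1 (this.2 h1)
  · push Not at hw
    obtain ⟨p, q, hpq, hle⟩ := hw
    have hlt : w p < w q := lt_of_le_of_ne hle fun e => adj_ne hpq (w.injective e)
    have l1 := len_adj w hpq hlt
    have l2 := len_le (w * swap p q)
    have h1 := ih _ (by omega) (w * swap p q) (swap p q k) rfl
    have h2 := mD_desc (w * swap p q) hpq (by simpa using hlt) (swap p q k)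
    rw [mul_assoc, swap_mul_self, mul_one, swap_apply_self] at h2
    rw [← h2]
    exact dd_mem (adj_ne hpq) h1

theorem monk_SS [NeZero N] (w : Perm (Fin N)) (k : Fin N) :
    Ideal.Quotient.mk (symIdeal N) (X k) * SS N w =
      (∑ c ∈ Finset.univ.filter (fun c => k < c),
        if len (w * swap k c) = len w + 1 then SS N (w * swap k c) else 0) -
      ∑ c ∈ Finset.univ.filter (fun c => c < k),
        if len (w * swap c k) = len w + 1 then SS N (w * swap c k) else 0 := by
  have h := mD_mem _ w k rfl
  rw [← Ideal.Quotient.eq_zero_iff_mem, mD, map_sub, sub_eq_zero, map_mul, map_sum] at h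
  rw [SS, h, Finset.sum_filter, Finset.sum_filter, ← Finset.sum_sub_distrib]
  refine Finset.sum_congr rfl fun c _ => ?_
  rw [mT]
  rcases lt_trichotomy k c with h1 | h1 | h1
  · simp only [h1, not_lt.2 h1.le, if_true, if_false, sub_zero]
    split_ifs <;> simp [SS]
  · subst h1
    rw [if_neg (len_self _ _)]
    simp
  · simp only [h1, not_lt.2 h1.le, if_true, if_false, zero_sub, swap_comm c k]
    split_ifs <;> simp [SS]

end

section
variable {K : Type} [CommRing K] {N : ℕ}

/-- List of centers. -/
def ctr (N : ℕ) : ℕ → List (Fin N)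
  | 0 => []
  | k + 1 => if h : k < N then ⟨k, h⟩ :: ctr N k else ctr N k

/-- Leaves. -/
def lvs (N k : ℕ) : Finset (Fin N) := Finset.univ.filter fun c => k ≤ (c : ℕ)

theorem mem_ctr (k : ℕ) (a : Fin N) : a ∈ ctr N k ↔ (a : ℕ) < k := by
  induction k with
  | zero => simp [ctr]
  | succ k ih =>
    rw [ctr]
    split_ifs with h
    · rw [List.mem_cons, ih, Fin.ext_iff]; simp only; omega
    · rw [ih]; omega

theorem nodup_ctr (k : ℕ) : (ctr N k).Nodup := by
  induction k with
  | zero => simp [ctr]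
  | succ k ih =>
    rw [ctr]
    split_ifs with h
    · rw [List.nodup_cons]
      exact ⟨by rw [mem_ctr]; simp, ih⟩
    · exact ih

theorem mem_lvs (k : ℕ) (c : Fin N) : c ∈ lvs N k ↔ k ≤ (c : ℕ) := by simp [lvs]

theorem insert_lvs (k : ℕ) (h : k < N) : insert (⟨k, h⟩ : Fin N) (lvs N (k + 1)) = lvs N k := by
  ext c
  rw [Finset.mem_insert, mem_lvs, mem_lvs, Fin.ext_iff]; simp only; omega

theorem pieri_rec [NeZero N] (k m : ℕ) (hk : k ≤ N) : ∀ w : Perm (Fin N),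
    opP (HRing N) (lvs N k) (ctr N k) (finF (SS N) m) (w, ∅) =
      Ideal.Quotient.mk (symIdeal N) (hPoly N k m) * SS N w := by
  induction k generalizing m with
  | zero =>
    intro w
    simp only [opP, ctr, List.map_nil, List.prod_nil, Module.End.one_apply, finF]
    cases m with
    | zero => simp [hPoly_zero_right]
    | succ m => simp [hPoly_zero_left]
  | succ k ih =>
    intro w
    have hL : ∀ c ∈ lvs N (k + 1), (⟨k, hk⟩ : Fin N) < c := by
      intro c hc
      rw [mem_lvs] at hc
      rw [Fin.lt_def]; exact hc
    have hA : ∀ a ∈ ctr N k, a < (⟨k, hk⟩ : Fin N) := by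
      intro a ha
      rw [mem_ctr] at ha
      rw [Fin.lt_def]; exact ha
    have ec : ctr N (k + 1) = ⟨k, hk⟩ :: ctr N k := by rw [ctr, dif_pos]
    induction m with
    | zero =>
      rw [hPoly_zero_right, map_one, one_mul]
      rw [opP_finF (fun a ha c hc => ?_) (nodup_ctr _), Finset.sum_eq_single w]
      · intro w' hw' hne
        rw [Finset.mem_filter, reach_iff (mem_lvs _) (mem_ctr _)] at hw'
        obtain ⟨_, a, b, _, h, _⟩ := hw'
        exact absurd (by simpa [tProd] using h) hne
      · intro h
        exfalso; apply h; rw [Finset.mem_filter]; exact ⟨Finset.mem_univ _, Reach.base ∅ (by simp)⟩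
      · rw [mem_ctr] at ha
        rw [mem_lvs] at hc
        rw [Fin.lt_def]; omega
    | succ m ihm =>
      rw [ec, rec_step hL _ hA (nodup_ctr k) (SS N)
        (Ideal.Quotient.mk (symIdeal N) (X ⟨k, hk⟩)) m ?_ w, insert_lvs, ← ec, ihm,
        ih (m + 1) (by omega), hPoly_rec k m hk, map_add, map_mul]
      · ring
      · funext s
        have e : ((ctr N k).map fun a => opT (HRing N) a ⟨k, hk⟩).sum =
            ∑ a ∈ Finset.univ.filter (fun c : Fin N => c < ⟨k, hk⟩), opT (HRing N) a ⟨k, hk⟩ := by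
          rw [← List.sum_toFinset _ (nodup_ctr k)]
          congr 1
          ext a
          rw [List.mem_toFinset, mem_ctr]; simp [Fin.lt_def]
        have e2 : lvs N (k + 1) = Finset.univ.filter (fun c : Fin N => ⟨k, hk⟩ < c) := by
          ext c
          rw [mem_lvs, Finset.mem_filter, Fin.lt_def]; simp only [Finset.mem_univ, true_and]; omega
        rw [e, e2]
        simp only [Pi.sub_apply, Finset.sum_apply, LinearMap.sum_apply, opT_apply, Pi.smul_apply,
          smul_eq_mul, finF]
        by_cases hs : s.2.card = m
        · simp only [hs, if_true]
          exact (monk_SS s.1 _).symm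
        · simp [hs]

end

/-- Pieri's rule for complete homogeneous symmetric polynomials:
`𝔖_w · h_m(x₁,…,x_k) = Σ_{w →_{r[k,m]} w'} 𝔖_{w'}` in `Hₙ` (here the paper's `n` is `n+1`). -/
theorem pieri_complete_homogeneous (n k m : ℕ) (hk : 1 ≤ k) (hm : 1 ≤ m)
    (hkm : k + m ≤ n + 1) (w : Equiv.Perm (Fin (n + 1))) :
    SS (n + 1) w * Ideal.Quotient.mk (symIdeal (n + 1)) (hPoly (n + 1) k m) =
      ∑ w' ∈ Finset.univ.filter (RelR (n + 1) k m w), SS (n + 1) w' := by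
  rw [mul_comm, ← pieri_rec k m (by omega) w, opP_finF (fun a ha c hc => ?_) (nodup_ctr _)]
  · refine Finset.sum_congr ?_ fun _ _ => rfl
    ext w'
    rw [Finset.mem_filter, Finset.mem_filter, reach_iff (mem_lvs _) (mem_ctr _)]
  · rw [mem_ctr] at ha
    rw [mem_lvs] at hc
    rw [Fin.lt_def]; omega

end SchubertPieri
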